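/- arXiv:2203.01328 — 5 statements merged into one kernel-verified Lean document; each statement's English description precedes it below -/
import Mathlib

section
/- Let N > 2 be an integer, Ω ⊂ ℝ^N a nonempty bounded open set with 0 ∈ Ω, let 0 ≤ γ ≤ 1, and set q = (N+γ)/(N+γ−2) and H = (N−2)/2. Then there exists C = C(N, Ω, γ) > 0 such that for every finite positive Borel measure ω on Ω ∖ {0} and every λ > 0: ∫_{{x ∈ Ω∖{0} : U(x) > λ}} d(x)|x|^{−H} dx ≤ C λ^{−q} ω(Ω∖{0})^q, where U(x) = ∫_{Ω∖{0}} [ |x−y|^{2−N} · min{1, d(x)d(y)/|x−y|^2} · ( min{1, |x||y|/|x−y|^2} )^{−H} + (|x||y|)^{−H} · | ln( min{1, |x−y|^2/(d(x)d(y))} ) | ] · |y|^{H} d(y)^{−γ} dω(y). -/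
open MeasureTheory Metric Set

lemma radial_bound (N : ℕ) (hN : 2 < N) (a : ℝ) (ha : a < N) :
    ∃ c : ℝ, 0 < c ∧ ∀ R : ℝ, 0 < R → ∀ y : EuclideanSpace ℝ (Fin N),
      ∫⁻ x, ENNReal.ofReal ((Iio R).indicator (fun s : ℝ => s ^ (-a)) (dist x y))
        ≤ ENNReal.ofReal (c * R ^ ((N : ℝ) - a)) := by
  have : Nonempty (Fin N) := ⟨⟨0, by omega⟩⟩
  have : Nontrivial (EuclideanSpace ℝ (Fin N)) := inferInstance
  set v := (volume : Measure (EuclideanSpace ℝ (Fin N))).real (ball 0 1) with hv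
  have hv0 : 0 ≤ v := measureReal_nonneg
  have hNa : 0 < (N : ℝ) - a := by linarith
  refine ⟨N * v * (1 / (N - a)) + 1, by positivity, fun R hR y => ?_⟩
  have hfr : Module.finrank ℝ (EuclideanSpace ℝ (Fin N)) = N := by simp
  have htr : ∫⁻ x, ENNReal.ofReal ((Iio R).indicator (fun s : ℝ => s ^ (-a)) (dist x y))
      = ∫⁻ x : EuclideanSpace ℝ (Fin N), ENNReal.ofReal ((Iio R).indicator (fun s : ℝ => s ^ (-a)) ‖x‖) := by
    rw [← lintegral_sub_right_eq_self (μ := volume) (fun x : EuclideanSpace ℝ (Fin N) =>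
      ENNReal.ofReal ((Iio R).indicator (fun s : ℝ => s ^ (-a)) ‖x‖)) y]
    simp only [dist_eq_norm]
  have key : ∀ s ∈ Ioi (0:ℝ), s ^ (N - 1) • (Iio R).indicator (fun s : ℝ => s ^ (-a)) s
      = (Ioo 0 R).indicator (fun s : ℝ => s ^ ((N : ℝ) - 1 - a)) s := by
    intro s hs
    have hs : 0 < s := hs
    by_cases h : s < R
    · simp only [indicator, mem_Iio, h, mem_Ioo, hs, and_self, if_true, smul_eq_mul]
      rw [← Real.rpow_natCast, ← Real.rpow_add hs]
      congr 1
      rw [Nat.cast_sub (by omega)]; push_cast; ring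
    · simp [indicator, h]
  have hint : IntegrableOn (fun s : ℝ => s ^ ((N : ℝ) - 1 - a)) (Ioo 0 R) :=
    (intervalIntegral.integrableOn_Ioo_rpow_iff hR).2 (by linarith)
  have hI : Integrable (fun x : EuclideanSpace ℝ (Fin N) =>
      (Iio R).indicator (fun s : ℝ => s ^ (-a)) ‖x‖) := by
    rw [integrable_fun_norm_addHaar (volume : Measure (EuclideanSpace ℝ (Fin N))), hfr,
      integrableOn_congr_fun key measurableSet_Ioi]
    exact ((integrable_indicator_iff measurableSet_Ioo).2 hint).integrableOn
  rw [htr, ← ofReal_integral_eq_lintegral_ofReal hI]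
  · apply ENNReal.ofReal_le_ofReal
    rw [integral_fun_norm_addHaar (volume : Measure (EuclideanSpace ℝ (Fin N))), hfr,
      setIntegral_congr_fun measurableSet_Ioi key, setIntegral_indicator measurableSet_Ioo]
    have : Ioi (0:ℝ) ∩ Ioo 0 R = Ioo 0 R := inter_eq_right.2 (fun s hs => hs.1)
    rw [this, ← integral_Ioc_eq_integral_Ioo, ← intervalIntegral.integral_of_le hR.le,
      integral_rpow (Or.inl (by linarith))]
    rw [Real.zero_rpow (by linarith), ← hv, nsmul_eq_mul, smul_eq_mul]
    have e : (N : ℝ) - 1 - a + 1 = N - a := by ring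
    rw [e]
    have : 0 < R ^ ((N:ℝ) - a) := Real.rpow_pos_of_pos hR _
    have e2 : (N:ℝ) * (v * ((R ^ ((N:ℝ) - a) - 0) / (N - a))) = N * v * (1 / (N - a)) * R ^ ((N:ℝ) - a) := by
      ring
    rw [e2]; nlinarith
  · refine Filter.Eventually.of_forall fun x => ?_
    simp only [indicator, Pi.zero_apply]
    split_ifs <;> positivity

lemma rpow_neg_anti {m r s : ℝ} (hm : 0 < m) (h : m ≤ r) (hs : 0 ≤ s) : r ^ (-s) ≤ m ^ (-s) :=
  Real.rpow_le_rpow_of_nonpos hm h (by linarith)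

lemma min_div_rpow {u v γ : ℝ} (hu : 0 < u) (hv : 0 < v) (h0 : 0 ≤ γ) (h1 : γ ≤ 1) :
    min 1 (u / v) * u ^ (-γ) ≤ v ^ (-γ) := by
  rcases le_total v u with h | h
  · calc min 1 (u / v) * u ^ (-γ) ≤ 1 * u ^ (-γ) := by gcongr; exact min_le_left _ _
      _ ≤ v ^ (-γ) := by rw [one_mul]; exact rpow_neg_anti hv h h0
  · have hq : u / v ≤ 1 := (div_le_one hv).2 h
    have hq0 : 0 < u / v := div_pos hu hv
    calc min 1 (u / v) * u ^ (-γ) ≤ (u / v) * u ^ (-γ) := by gcongr; exact min_le_right _ _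
      _ ≤ (u / v) ^ γ * u ^ (-γ) := by
        gcongr
        calc u / v = (u / v) ^ (1:ℝ) := (Real.rpow_one _).symm
          _ ≤ (u / v) ^ γ := Real.rpow_le_rpow_of_exponent_ge hq0 hq h1
      _ = v ^ (-γ) := by
        rw [Real.div_rpow hu.le hv.le, Real.rpow_neg hu.le, Real.rpow_neg hv.le]
        have := Real.rpow_pos_of_pos hu γ
        field_simp

lemma F_bound {r d e γ : ℝ} (hr : 0 < r) (hd : 0 < d) (he : 0 < e) (h0 : 0 ≤ γ) (h1 : γ ≤ 1)
    (h : d ≤ e + r) :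
    min 1 (d * e / r ^ 2) * e ^ (-γ) ≤ 4 * d ^ (-γ) ∧
    min 1 (d * e / r ^ 2) * e ^ (-γ) ≤ 4 * r ^ (-γ) := by
  have A : min 1 (d * e / r ^ 2) ≤ 4 * min 1 (e / d) := by
    rcases le_total d (2 * e) with h2 | h2
    · have : 1 / 2 ≤ e / d := by rw [le_div_iff₀ hd]; linarith
      have : 1 / 2 ≤ min 1 (e / d) := le_min (by norm_num) this
      linarith [min_le_left 1 (d * e / r ^ 2)]
    · have h3 : e / d ≤ 1 := by rw [div_le_one hd]; linarith
      rw [min_eq_right h3]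
      refine (min_le_right _ _).trans ?_
      rw [← mul_div_assoc, div_le_div_iff₀ (by positivity) hd]
      have : d ≤ 2 * r := by linarith
      nlinarith [mul_le_mul this this hd.le (by positivity)]
  have B : min 1 (d * e / r ^ 2) ≤ 4 * min 1 (e / r) := by
    rcases le_total r e with h2 | h2
    · have : 1 ≤ e / r := by rw [le_div_iff₀ hr]; linarith
      rw [min_eq_left this]
      linarith [min_le_left 1 (d * e / r ^ 2)]
    · have h3 : e / r ≤ 1 := by rw [div_le_one hr]; linarith
      rw [min_eq_right h3]
      refine (min_le_right _ _).trans ?_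
      rw [← mul_div_assoc, div_le_div_iff₀ (by positivity) hr]
      have : d ≤ 2 * r := by linarith
      nlinarith [mul_pos he hr, mul_pos (mul_pos he hr) hr]
  constructor
  · calc _ ≤ 4 * min 1 (e / d) * e ^ (-γ) := by gcongr
      _ = 4 * (min 1 (e / d) * e ^ (-γ)) := by ring
      _ ≤ _ := by gcongr; exact min_div_rpow he hd h0 h1
  · calc _ ≤ 4 * min 1 (e / r) * e ^ (-γ) := by gcongr
      _ = 4 * (min 1 (e / r) * e ^ (-γ)) := by ring
      _ ≤ _ := by gcongr; exact min_div_rpow he hr h0 h1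

lemma d_pow {d D γ : ℝ} (hd : 0 < d) (hD : 1 ≤ D) (hdD : d ≤ D) (h0 : 0 ≤ γ) (h1 : γ ≤ 1) :
    d ^ (-γ) * d ≤ D := by
  calc d ^ (-γ) * d = d ^ (-γ + 1) := by rw [Real.rpow_add hd, Real.rpow_one]
    _ ≤ D ^ (-γ + 1) := Real.rpow_le_rpow hd.le hdD (by linarith)
    _ ≤ D ^ (1:ℝ) := Real.rpow_le_rpow_of_exponent_le hD (by linarith)
    _ = D := Real.rpow_one _

lemma K1_bound {H γ D : ℝ} (hH : 0 < H) (h0 : 0 ≤ γ) (h1 : γ ≤ 1) (hD : 1 ≤ D) :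
    ∃ A : ℝ, 0 < A ∧ ∀ r X Y d e m : ℝ, 0 < r → 0 < X → 0 < Y → 0 < d → 0 < e → 0 < m →
      m ≤ r → m ≤ X → X ≤ D → Y ≤ D → d ≤ D → Y ≤ X + r → d ≤ e + r →
      (r ^ (-(2 * H)) * min 1 (d * e / r ^ 2) * (min 1 (X * Y / r ^ 2)) ^ (-H) * (Y ^ H * e ^ (-γ))
        ≤ A * m ^ (-(2 * H + γ))) ∧
      (r ^ (-(2 * H)) * min 1 (d * e / r ^ 2) * (min 1 (X * Y / r ^ 2)) ^ (-H) * (Y ^ H * e ^ (-γ))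
        * (d * X ^ (-H)) ≤ A * m ^ (-(2 * H))) := by
  refine ⟨8 * D ^ H + 4 * D * (2 * 2 ^ H + 1), by positivity, ?_⟩
  intro r X Y d e m hr hX hY hd he hm hmr hmX hXD hYD hdD hYX hde
  obtain ⟨F1, F2⟩ := F_bound hr hd he h0 h1 hde
  set F := min 1 (d * e / r ^ 2) * e ^ (-γ) with hF
  have hF0 : 0 ≤ F := by positivity
  have hz : (min 1 (X * Y / r ^ 2)) ^ (-H) ≤ 1 + X ^ (-H) * Y ^ (-H) * r ^ (2 * H) := by
    have hp : 0 < X * Y / r ^ 2 := by positivity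
    have e1 : (X * Y / r ^ 2) ^ (-H) = X ^ (-H) * Y ^ (-H) * r ^ (2 * H) := by
      rw [Real.div_rpow (by positivity) (by positivity), Real.mul_rpow hX.le hY.le,
        ← Real.rpow_natCast r 2, ← Real.rpow_mul hr.le, div_eq_mul_inv, ← Real.rpow_neg hr.le]
      congr 2; push_cast; ring
    rw [← e1]
    have := Real.rpow_pos_of_pos hp (-H)
    rcases le_total 1 (X * Y / r ^ 2) with h | h
    · rw [min_eq_left h, Real.one_rpow]; linarith
    · rw [min_eq_right h]; linarith
  have hrr : r ^ (-(2 * H)) * r ^ (2 * H) = 1 := by rw [← Real.rpow_add hr]; simp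
  have hYY : Y ^ (-H) * Y ^ H = 1 := by rw [← Real.rpow_add hY]; simp
  have hXX : X ^ (-H) * X ^ H = 1 := by rw [← Real.rpow_add hX]; simp
  have hK : r ^ (-(2 * H)) * min 1 (d * e / r ^ 2) * (min 1 (X * Y / r ^ 2)) ^ (-H) * (Y ^ H * e ^ (-γ))
      ≤ F * (r ^ (-(2 * H)) * Y ^ H + X ^ (-H)) := by
    calc _ ≤ r ^ (-(2 * H)) * min 1 (d * e / r ^ 2) * (1 + X ^ (-H) * Y ^ (-H) * r ^ (2 * H)) * (Y ^ H * e ^ (-γ)) := by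
          gcongr
      _ = F * (r ^ (-(2 * H)) * Y ^ H + X ^ (-H) * (Y ^ (-H) * Y ^ H) * (r ^ (-(2 * H)) * r ^ (2 * H))) := by
          rw [hF]; ring
      _ = _ := by rw [hrr, hYY]; ring
  have r2H : r ^ (-(2 * H)) ≤ m ^ (-(2 * H)) := rpow_neg_anti hm hmr (by positivity)
  have X2H : X ^ (-(2 * H)) ≤ m ^ (-(2 * H)) := rpow_neg_anti hm hmX (by positivity)
  have rH : r ^ (-H) ≤ m ^ (-H) := rpow_neg_anti hm hmr (by positivity)
  have XH : X ^ (-H) ≤ m ^ (-H) := rpow_neg_anti hm hmX (by positivity)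
  have rg : r ^ (-γ) ≤ m ^ (-γ) := rpow_neg_anti hm hmr h0
  have YD : Y ^ H ≤ D ^ H := Real.rpow_le_rpow hY.le hYD hH.le
  have XD : X ^ H ≤ D ^ H := Real.rpow_le_rpow hX.le hXD hH.le
  have eX : X ^ (-H) = X ^ (-(2 * H)) * X ^ H := by rw [← Real.rpow_add hX]; congr 1; ring
  have eX2 : X ^ (-(2 * H)) = X ^ (-H) * X ^ (-H) := by rw [← Real.rpow_add hX]; congr 1; ring
  have er2 : r ^ (-(2 * H)) * r ^ H = r ^ (-H) := by rw [← Real.rpow_add hr]; congr 1; ring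
  have em2 : m ^ (-(2 * H)) = m ^ (-H) * m ^ (-H) := by rw [← Real.rpow_add hm]; congr 1; ring
  have emg : m ^ (-(2 * H + γ)) = m ^ (-γ) * m ^ (-(2 * H)) := by
    rw [← Real.rpow_add hm]; congr 1; ring
  constructor
  · refine hK.trans ?_
    calc F * (r ^ (-(2 * H)) * Y ^ H + X ^ (-H))
        ≤ (4 * m ^ (-γ)) * (m ^ (-(2 * H)) * D ^ H + m ^ (-(2 * H)) * D ^ H) := by
          rw [eX]
          gcongr
          linarith
      _ = (8 * D ^ H) * m ^ (-(2 * H + γ)) := by rw [emg]; ring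
      _ ≤ _ := by
          gcongr
          have : 0 ≤ 4 * D * (2 * 2 ^ H + 1) := by positivity
          linarith
  · have hY2 : Y ^ H ≤ 2 ^ H * (X ^ H + r ^ H) := by
      have a1 : 0 ≤ X ^ H := by positivity
      have a2 : 0 ≤ r ^ H := by positivity
      rcases le_total r X with h | h
      · calc Y ^ H ≤ (2 * X) ^ H := Real.rpow_le_rpow hY.le (by linarith) hH.le
          _ = 2 ^ H * X ^ H := Real.mul_rpow (by norm_num) hX.le
          _ ≤ _ := by gcongr; linarith
      · calc Y ^ H ≤ (2 * r) ^ H := Real.rpow_le_rpow hY.le (by linarith) hH.le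
          _ = 2 ^ H * r ^ H := Real.mul_rpow (by norm_num) hr.le
          _ ≤ _ := by gcongr; linarith
    have hFd : F * d ≤ 4 * D := by
      calc F * d ≤ 4 * d ^ (-γ) * d := by gcongr
        _ = 4 * (d ^ (-γ) * d) := by ring
        _ ≤ _ := by gcongr; exact d_pow hd hD hdD h0 h1
    calc _ ≤ F * (r ^ (-(2 * H)) * Y ^ H + X ^ (-H)) * (d * X ^ (-H)) := by gcongr
      _ = (F * d) * (r ^ (-(2 * H)) * Y ^ H * X ^ (-H) + X ^ (-(2 * H))) := by rw [eX2]; ring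
      _ ≤ (4 * D) * (r ^ (-(2 * H)) * (2 ^ H * (X ^ H + r ^ H)) * X ^ (-H) + X ^ (-(2 * H))) := by
          gcongr
      _ = (4 * D) * (2 ^ H * (r ^ (-(2 * H)) * (X ^ (-H) * X ^ H) + (r ^ (-(2 * H)) * r ^ H) * X ^ (-H)) + X ^ (-(2 * H))) := by
          ring
      _ = (4 * D) * (2 ^ H * (r ^ (-(2 * H)) + r ^ (-H) * X ^ (-H)) + X ^ (-(2 * H))) := by
          rw [hXX, er2, mul_one]
      _ ≤ (4 * D) * (2 ^ H * (m ^ (-(2 * H)) + m ^ (-H) * m ^ (-H)) + m ^ (-(2 * H))) := by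
          gcongr
      _ = (4 * D * (2 * 2 ^ H + 1)) * m ^ (-(2 * H)) := by rw [← em2]; ring
      _ ≤ _ := by
          gcongr
          have : 0 ≤ 8 * D ^ H := by positivity
          linarith

lemma L_bound {r d e γ ε D : ℝ} (hr : 0 < r) (hd : 0 < d) (he : 0 < e) (h0 : 0 ≤ γ) (h1 : γ ≤ 1)
    (hε : 0 < ε) (hdD : d ≤ D) (heD : e ≤ D)
    (h : d ≤ e + r) :
    |Real.log (min 1 (r ^ 2 / (d * e)))| * e ^ (-γ) ≤ 8 * D ^ ε / ε * (r ^ (-ε) * d ^ (-γ)) ∧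
    |Real.log (min 1 (r ^ 2 / (d * e)))| * e ^ (-γ) ≤ 8 * D ^ ε / ε * (r ^ (-ε) * r ^ (-γ)) := by
  have hD : 0 < D := hd.trans_le hdD
  rcases le_total (d * e) (r ^ 2) with h2 | h2
  · have : 1 ≤ r ^ 2 / (d * e) := by rw [le_div_iff₀ (by positivity)]; linarith
    rw [min_eq_left this]
    simp only [Real.log_one, abs_zero, zero_mul]
    constructor <;> positivity
  · have hle : r ^ 2 / (d * e) ≤ 1 := by rw [div_le_one (by positivity)]; linarith
    rw [min_eq_right hle]
    have hL : |Real.log (r ^ 2 / (d * e))| ≤ 2 * D ^ ε / ε * r ^ (-ε) := by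
      rw [abs_of_nonpos (Real.log_nonpos (by positivity) hle), ← Real.log_inv, inv_div]
      have h3 : d * e / r ^ 2 ≤ (D / r) ^ 2 := by
        rw [div_pow]; gcongr; rw [pow_two]; gcongr
      calc Real.log (d * e / r ^ 2) ≤ Real.log ((D / r) ^ 2) := Real.log_le_log (by positivity) h3
        _ = 2 * Real.log (D / r) := by rw [Real.log_pow]; norm_num
        _ ≤ 2 * ((D / r) ^ ε / ε) := by
            gcongr; exact Real.log_le_rpow_div (by positivity) hε
        _ = _ := by rw [Real.div_rpow hD.le hr.le, Real.rpow_neg hr.le]; ring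
    have hd4 : d ≤ 4 * e := by
      by_contra hc
      push Not at hc
      have : 3 / 4 * d ≤ r := by linarith
      have := mul_le_mul this this (by positivity) hr.le
      nlinarith
    have hr4 : r ≤ 4 * e := by
      have : r ^ 2 ≤ (4 * e) ^ 2 := by nlinarith
      exact le_of_sq_le_sq this (by positivity) 
    have gen : ∀ v, 0 < v → v ≤ 4 * e → e ^ (-γ) ≤ 4 * v ^ (-γ) := by
      intro v hv hve
      calc e ^ (-γ) ≤ (v / 4) ^ (-γ) := rpow_neg_anti (by positivity) (by linarith) h0
        _ = 4 ^ γ * v ^ (-γ) := by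
            rw [Real.div_rpow hv.le (by norm_num), Real.rpow_neg (by norm_num : (0:ℝ) ≤ 4)]
            field_simp
        _ ≤ 4 ^ (1:ℝ) * v ^ (-γ) := by
            gcongr; norm_num
        _ = _ := by norm_num
    constructor
    · calc _ ≤ 2 * D ^ ε / ε * r ^ (-ε) * (4 * d ^ (-γ)) := by gcongr; exact gen d hd hd4
        _ = _ := by ring
    · calc _ ≤ 2 * D ^ ε / ε * r ^ (-ε) * (4 * r ^ (-γ)) := by gcongr; exact gen r hr hr4
        _ = _ := by ring

lemma K2_bound {H γ D ε : ℝ} (hH : 0 < H) (h0 : 0 ≤ γ) (h1 : γ ≤ 1) (hD : 1 ≤ D) (hε : 0 < ε) :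
    ∃ A : ℝ, 0 < A ∧ ∀ r X Y d e m : ℝ, 0 < r → 0 < X → 0 < Y → 0 < d → 0 < e → 0 < m →
      m ≤ r → m ≤ X → d ≤ D → e ≤ D → d ≤ e + r →
      ((X * Y) ^ (-H) * |Real.log (min 1 (r ^ 2 / (d * e)))| * (Y ^ H * e ^ (-γ))
        ≤ A * m ^ (-(H + γ + ε))) ∧
      ((X * Y) ^ (-H) * |Real.log (min 1 (r ^ 2 / (d * e)))| * (Y ^ H * e ^ (-γ))
        * (d * X ^ (-H)) ≤ A * m ^ (-(2 * H + ε))) := by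
  refine ⟨8 * D ^ ε / ε * D, by positivity, ?_⟩
  intro r X Y d e m hr hX hY hd he hm hmr hmX hdD heD hde
  obtain ⟨L1, L2⟩ := L_bound hr hd he h0 h1 hε hdD heD hde
  set L := |Real.log (min 1 (r ^ 2 / (d * e)))|
  have hYY : Y ^ (-H) * Y ^ H = 1 := by rw [← Real.rpow_add hY]; simp
  have eK : (X * Y) ^ (-H) * L * (Y ^ H * e ^ (-γ)) = X ^ (-H) * (L * e ^ (-γ)) := by
    rw [Real.mul_rpow hX.le hY.le]
    calc _ = X ^ (-H) * (L * e ^ (-γ)) * (Y ^ (-H) * Y ^ H) := by ring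
      _ = _ := by rw [hYY, mul_one]
  have XH : X ^ (-H) ≤ m ^ (-H) := rpow_neg_anti hm hmX (by positivity)
  have rg : r ^ (-γ) ≤ m ^ (-γ) := rpow_neg_anti hm hmr h0
  have re : r ^ (-ε) ≤ m ^ (-ε) := rpow_neg_anti hm hmr hε.le
  set A := 8 * D ^ ε / ε
  have hA : 0 < A := by positivity
  rw [eK]
  constructor
  · calc _ ≤ m ^ (-H) * (A * (m ^ (-ε) * m ^ (-γ))) := by
          exact mul_le_mul XH (L2.trans (by gcongr)) (by positivity) (by positivity)
      _ = A * m ^ (-(H + γ + ε)) := by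
          have : -(H + γ + ε) = -H + (-ε + -γ) := by ring
          rw [this, Real.rpow_add hm, Real.rpow_add hm]; ring
      _ ≤ _ := by gcongr; nlinarith
  · calc _ ≤ X ^ (-H) * (A * (r ^ (-ε) * d ^ (-γ))) * (d * X ^ (-H)) := by gcongr
      _ = A * X ^ (-H) * X ^ (-H) * r ^ (-ε) * (d ^ (-γ) * d) := by ring
      _ ≤ A * m ^ (-H) * m ^ (-H) * m ^ (-ε) * D := by gcongr; exact d_pow hd hD hdD h0 h1
      _ = _ := by
          have : -(2 * H + ε) = -H + (-H + -ε) := by ring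
          rw [this, Real.rpow_add hm, Real.rpow_add hm]; ring
lemma measurable_ind (N : ℕ) (a R : ℝ) (y : EuclideanSpace ℝ (Fin N)) :
    Measurable (fun x : EuclideanSpace ℝ (Fin N) =>
      ENNReal.ofReal ((Iio R).indicator (fun s : ℝ => s ^ (-a)) (dist x y))) := by
  have h : Measurable ((Iio R).indicator (fun s : ℝ => s ^ (-a))) :=
    Measurable.indicator (by fun_prop) measurableSet_Iio
  exact (h.comp (by fun_prop)).ennreal_ofReal

lemma int_bound (N : ℕ) (hN : 2 < N) (a b θ A V : ℝ) (ha : a < N) (ha0 : 0 ≤ a) (hb : 0 ≤ b)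
    (hθ : θ ≤ ((N : ℝ) - a) / (N - a + b)) (hA : 0 < A) (hV : 0 < V) :
    ∃ C : ℝ, 0 < C ∧ ∀ (E : Set (EuclideanSpace ℝ (Fin N))) (y : EuclideanSpace ℝ (Fin N))
      (w f : EuclideanSpace ℝ (Fin N) → ℝ), MeasurableSet E → Measurable w →
      (∀ x ∈ E, 0 ≤ w x) → (∀ x ∈ E, x ≠ 0) →
      (∀ x ∈ E, x ≠ y → f x * w x ≤ A * (min (dist x y) (dist x 0)) ^ (-a)) →
      (∀ x ∈ E, x ≠ y → f x ≤ A * (min (dist x y) (dist x 0)) ^ (-b)) →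
      (∫⁻ x in E, ENNReal.ofReal (w x)) ≤ ENNReal.ofReal V →
      ∫⁻ x in E, ENNReal.ofReal (f x * w x) ≤
        ENNReal.ofReal C * (∫⁻ x in E, ENNReal.ofReal (w x)) ^ θ := by
  obtain ⟨c, hc, hcR⟩ := radial_bound N hN a ha
  set p := (N : ℝ) - a with hp
  have hp0 : 0 < p := by linarith
  have hk : 0 < p + b := by linarith
  refine ⟨A * (2 * c + 1) * V ^ (p / (p + b) - θ), by positivity, ?_⟩
  intro E y w f hE hw hw0 hE0 h1 h2 hWV
  set W := ∫⁻ x in E, ENNReal.ofReal (w x) with hW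
  by_cases hW0 : W = 0
  · have : ∀ᵐ x ∂(volume.restrict E), ENNReal.ofReal (f x * w x) = 0 := by
      have h3 := (lintegral_eq_zero_iff (by fun_prop)).1 (hW.symm.trans hW0)
      filter_upwards [h3, ae_restrict_mem hE] with x hx hxE
      have : w x = 0 := le_antisymm (by simpa using hx) (hw0 x hxE)
      simp [this]
    rw [lintegral_congr_ae this]; simp
  have hWt : W ≠ ⊤ := (hWV.trans_lt ENNReal.ofReal_lt_top).ne
  obtain ⟨v, hv⟩ : ∃ v : ℝ, v = W.toReal := ⟨_, rfl⟩
  have hWv : W = ENNReal.ofReal v := by rw [hv, ENNReal.ofReal_toReal hWt]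
  have hv0 : 0 < v := hv ▸ ENNReal.toReal_pos hW0 hWt
  have hvV : v ≤ V := by
    rw [hWv] at hWV; exact (ENNReal.ofReal_le_ofReal_iff hV.le).1 hWV
  set R := v ^ (1 / (p + b)) with hR
  have hR0 : 0 < R := Real.rpow_pos_of_pos hv0 _
  set g : EuclideanSpace ℝ (Fin N) → EuclideanSpace ℝ (Fin N) → ENNReal := fun z x =>
    ENNReal.ofReal ((Iio R).indicator (fun s : ℝ => s ^ (-a)) (dist x z)) with hg
  have hgm : ∀ z, Measurable (g z) := fun z => measurable_ind N a R z
  have hind : ∀ s : ℝ, 0 ≤ s → 0 ≤ (Iio R).indicator (fun s : ℝ => s ^ (-a)) s := by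
    intro s hs
    simp only [indicator]
    split_ifs <;> positivity
  have pt : ∀ᵐ x ∂(volume.restrict E), ENNReal.ofReal (f x * w x) ≤
      ENNReal.ofReal A * (g y x + g 0 x) + ENNReal.ofReal (A * R ^ (-b)) * ENNReal.ofReal (w x) := by
    have hne : ∀ᵐ x ∂(volume : Measure (EuclideanSpace ℝ (Fin N))), x ≠ y := by
      have : Nonempty (Fin N) := ⟨⟨0, by omega⟩⟩
      simp [ae_iff]
    filter_upwards [ae_restrict_mem hE, ae_restrict_of_ae hne] with x hx hxy
    have i1 := hind (dist x y) dist_nonneg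
    have i2 := hind (dist x 0) dist_nonneg
    rw [hg]
    simp only
    rw [← ENNReal.ofReal_add i1 i2, ← ENNReal.ofReal_mul hA.le, ← ENNReal.ofReal_mul (by positivity),
      ← ENNReal.ofReal_add (by positivity) (mul_nonneg (by positivity) (hw0 x hx))]
    apply ENNReal.ofReal_le_ofReal
    have hwx := hw0 x hx
    have hxy' : 0 < dist x y := dist_pos.2 hxy
    have hx0' : 0 < dist x 0 := dist_pos.2 (hE0 x hx)
    have third : 0 ≤ A * R ^ (-b) * w x := by positivity
    rcases lt_or_ge (min (dist x y) (dist x 0)) R with h | h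
    · have : (min (dist x y) (dist x 0)) ^ (-a) ≤
        (Iio R).indicator (fun s : ℝ => s ^ (-a)) (dist x y) + (Iio R).indicator (fun s : ℝ => s ^ (-a)) (dist x 0) := by
        rcases min_choice (dist x y) (dist x 0) with h3 | h3
        · rw [h3] at h ⊢
          rw [indicator_of_mem (show dist x y ∈ Iio R from h)]; linarith
        · rw [h3] at h ⊢
          rw [indicator_of_mem (show dist x 0 ∈ Iio R from h)]; linarith
      have := mul_le_mul_of_nonneg_left this hA.le
      linarith [h1 x hx hxy]
    · have : f x ≤ A * R ^ (-b) := (h2 x hx hxy).trans 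
        (mul_le_mul_of_nonneg_left (rpow_neg_anti hR0 h hb) hA.le)
      have := mul_le_mul_of_nonneg_right this hwx
      have := mul_nonneg hA.le (add_nonneg i1 i2)
      linarith
  have eR1 : R ^ p = v ^ (p / (p + b)) := by
    rw [hR, ← Real.rpow_mul hv0.le]; congr 1; ring
  have eR2 : R ^ (-b) * v = v ^ (p / (p + b)) := by
    rw [hR, ← Real.rpow_mul hv0.le]
    nth_rewrite 2 [← Real.rpow_one v]
    rw [← Real.rpow_add hv0]; congr 1; field_simp; ring
  calc _ ≤ ∫⁻ x in E, (ENNReal.ofReal A * (g y x + g 0 x) + ENNReal.ofReal (A * R ^ (-b)) * ENNReal.ofReal (w x)) :=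
        lintegral_mono_ae pt
    _ = ENNReal.ofReal A * ((∫⁻ x in E, g y x) + ∫⁻ x in E, g 0 x) + ENNReal.ofReal (A * R ^ (-b)) * W := by
        have hmm : Measurable (fun x => ENNReal.ofReal A * (g y x + g 0 x)) :=
          ((hgm y).add (hgm 0)).const_mul _
        rw [lintegral_add_left hmm, lintegral_const_mul' _ _ ENNReal.ofReal_ne_top,
          lintegral_const_mul' _ _ ENNReal.ofReal_ne_top, lintegral_add_left (hgm y)]
    _ ≤ ENNReal.ofReal A * (ENNReal.ofReal (c * R ^ p) + ENNReal.ofReal (c * R ^ p)) + ENNReal.ofReal (A * R ^ (-b)) * W := by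
        gcongr
        · exact (setLIntegral_le_lintegral _ _).trans (hcR R hR0 y)
        · exact (setLIntegral_le_lintegral _ _).trans (hcR R hR0 0)
    _ = ENNReal.ofReal (A * (c * R ^ p + c * R ^ p) + A * R ^ (-b) * v) := by
        rw [hWv, ← ENNReal.ofReal_add (by positivity) (by positivity), ← ENNReal.ofReal_mul (by positivity),
          ← ENNReal.ofReal_mul (by positivity), ← ENNReal.ofReal_add (by positivity) (by positivity)]
    _ ≤ ENNReal.ofReal (A * (2 * c + 1) * V ^ (p / (p + b) - θ) * v ^ θ) := by
        apply ENNReal.ofReal_le_ofReal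
        rw [mul_assoc A (R ^ (-b)), eR2, eR1]
        have : v ^ (p / (p + b)) ≤ V ^ (p / (p + b) - θ) * v ^ θ := by
          calc v ^ (p / (p + b)) = v ^ (p / (p + b) - θ) * v ^ θ := by
                rw [← Real.rpow_add hv0]; congr 1; ring
            _ ≤ _ := by
                gcongr
        calc _ = A * (2 * c + 1) * v ^ (p / (p + b)) := by ring
          _ ≤ A * (2 * c + 1) * (V ^ (p / (p + b) - θ) * v ^ θ) := by gcongr
          _ = _ := by ring
    _ = _ := by
        rw [ENNReal.ofReal_mul (by positivity), hWv, ENNReal.ofReal_rpow_of_pos hv0]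

lemma final_alg {s C t : ℝ} (hs : 2 < s) (hC : 0 < C) (ht : 0 < t) (W M : ENNReal)
    (hW : W ≠ ⊤) (hM : M ≠ ⊤)
    (h : ENNReal.ofReal t * W ≤ ENNReal.ofReal C * W ^ (2 / s) * M) :
    W ≤ ENNReal.ofReal (C ^ (s / (s - 2)) * t ^ (-(s / (s - 2)))) * M ^ (s / (s - 2)) := by
  by_cases hW0 : W = 0
  · simp [hW0]
  have hs2 : 0 < s - 2 := by linarith
  have hs0 : 0 < s := by linarith
  set q := s / (s - 2) with hq
  have hq0 : 0 < q := by positivity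
  have hw : 0 < W.toReal := ENNReal.toReal_pos hW0 hW
  have hm : 0 ≤ M.toReal := ENNReal.toReal_nonneg
  set w := W.toReal with hwd
  set m := M.toReal with hmd
  have hWw : W = ENNReal.ofReal w := (ENNReal.ofReal_toReal hW).symm
  have hMm : M = ENNReal.ofReal m := (ENNReal.ofReal_toReal hM).symm
  rw [hWw, hMm] at h ⊢
  rw [ENNReal.ofReal_rpow_of_pos hw, ← ENNReal.ofReal_mul ht.le, ← ENNReal.ofReal_mul hC.le,
    ← ENNReal.ofReal_mul (by positivity), ENNReal.ofReal_le_ofReal_iff (by positivity)] at h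
  rw [ENNReal.ofReal_rpow_of_nonneg hm hq0.le, ← ENNReal.ofReal_mul (by positivity)]
  apply ENNReal.ofReal_le_ofReal
  have h1 : w ^ (1 / q) ≤ C * t⁻¹ * m := by
    have e : w = w ^ (1 / q) * w ^ (2 / s) := by
      rw [← Real.rpow_add hw]
      have : 1 / q + 2 / s = 1 := by rw [hq]; field_simp; ring
      rw [this, Real.rpow_one]
    have hp : 0 < w ^ (2 / s) := by positivity
    have h2 : (t * w ^ (1 / q)) * w ^ (2 / s) ≤ (C * m) * w ^ (2 / s) := by
      calc _ = t * (w ^ (1 / q) * w ^ (2 / s)) := by ring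
        _ = t * w := by rw [← e]
        _ ≤ _ := by linarith
    have h3 := le_of_mul_le_mul_right h2 hp
    calc w ^ (1 / q) = t⁻¹ * (t * w ^ (1 / q)) := by field_simp
      _ ≤ t⁻¹ * (C * m) := by gcongr
      _ = _ := by ring
  calc w = (w ^ (1 / q)) ^ q := by
        rw [← Real.rpow_mul hw.le]; rw [one_div, inv_mul_cancel₀ hq0.ne', Real.rpow_one]
    _ ≤ (C * t⁻¹ * m) ^ q := by gcongr
    _ = _ := by
        rw [Real.mul_rpow (by positivity) hm, Real.mul_rpow hC.le (by positivity),
          Real.inv_rpow ht.le, Real.rpow_neg ht.le]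

theorem weak_estimate_green_critical (N : ℕ) (hN : 2 < N)
    (Ω : Set (EuclideanSpace ℝ (Fin N)))
    (hΩo : IsOpen Ω) (hΩb : Bornology.IsBounded Ω) (h0 : (0 : EuclideanSpace ℝ (Fin N)) ∈ Ω)
    (γ : ℝ) (hγ0 : 0 ≤ γ) (hγ1 : γ ≤ 1) :
    ∃ C : ℝ, 0 < C ∧ ∀ (ω : Measure (EuclideanSpace ℝ (Fin N))), IsFiniteMeasure ω →
      ∀ t : ℝ, 0 < t →
      (∫⁻ x in {x | x ∈ Ω \ {0} ∧ ENNReal.ofReal t <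
          ∫⁻ y in Ω \ {0}, ENNReal.ofReal
            ((dist x y ^ (2 - (N : ℝ)) *
                min 1 (infDist x (frontier Ω) * infDist y (frontier Ω) / dist x y ^ 2) *
                (min 1 (‖x‖ * ‖y‖ / dist x y ^ 2)) ^ (-(((N : ℝ) - 2) / 2)) +
              (‖x‖ * ‖y‖) ^ (-(((N : ℝ) - 2) / 2)) *
                |Real.log (min 1 (dist x y ^ 2 /
                  (infDist x (frontier Ω) * infDist y (frontier Ω))))|) *
              (‖y‖ ^ (((N : ℝ) - 2) / 2) * infDist y (frontier Ω) ^ (-γ))) ∂ω},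
        ENNReal.ofReal (infDist x (frontier Ω) * ‖x‖ ^ (-(((N : ℝ) - 2) / 2))))
      ≤ ENNReal.ofReal (C * t ^ (-(((N : ℝ) + γ) / ((N : ℝ) + γ - 2)))) *
          (ω (Ω \ {0})) ^ (((N : ℝ) + γ) / ((N : ℝ) + γ - 2)) := by
  have : Nonempty (Fin N) := ⟨⟨0, by omega⟩⟩
  have hN3 : (3 : ℝ) ≤ N := by exact_mod_cast hN
  obtain ⟨H, hHd⟩ : ∃ H : ℝ, H = ((N : ℝ) - 2) / 2 := ⟨_, rfl⟩
  have hNH : (N : ℝ) = 2 * H + 2 := by rw [hHd]; ring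
  have e2 : 2 - (N : ℝ) = -(2 * H) := by rw [hNH]; ring
  rw [← hHd, e2]
  have hH : 0 < H := by linarith
  -- geometry
  have hfr : (frontier Ω).Nonempty := by
    rw [nonempty_frontier_iff]
    refine ⟨⟨0, h0⟩, fun h => ?_⟩
    rw [h] at hΩb
    exact NormedSpace.unbounded_univ ℝ (EuclideanSpace ℝ (Fin N)) hΩb
  obtain ⟨ρ, hρ⟩ := hΩb.subset_ball 0
  have hρ0 : 0 < ρ := by simpa using hρ h0
  set δ : EuclideanSpace ℝ (Fin N) → ℝ := fun x => infDist x (frontier Ω) with hδ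
  have hδpos : ∀ x ∈ Ω, 0 < δ x := by
    intro x hx
    refine (isClosed_frontier.notMem_iff_infDist_pos hfr).1 fun h => ?_
    rw [hΩo.frontier_eq] at h
    exact h.2 hx
  have hδlip : ∀ x y, δ x ≤ δ y + dist x y := fun x y => infDist_le_infDist_add_dist
  have hδm : Measurable δ := by
    have := continuous_infDist_pt (frontier Ω)
    exact this.measurable
  obtain ⟨D, hD⟩ : ∃ D : ℝ, D = δ 0 + ρ + 1 := ⟨_, rfl⟩
  have hδ0 := hδpos 0 h0
  have hD1 : 1 ≤ D := by linarith
  have hnorm : ∀ x ∈ Ω, ‖x‖ < ρ := fun x hx => by simpa using hρ hx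
  have hXD : ∀ x ∈ Ω, ‖x‖ ≤ D := fun x hx => by linarith [hnorm x hx]
  have hdD : ∀ x ∈ Ω, δ x ≤ D := fun x hx => by
    have := hδlip x 0
    rw [dist_zero_right] at this
    linarith [hnorm x hx]
  change ∃ C : ℝ, 0 < C ∧ ∀ (ω : Measure (EuclideanSpace ℝ (Fin N))), IsFiniteMeasure ω →
      ∀ t : ℝ, 0 < t →
      (∫⁻ x in {x | x ∈ Ω \ {0} ∧ ENNReal.ofReal t <
          ∫⁻ y in Ω \ {0}, ENNReal.ofReal
            ((dist x y ^ (-(2 * H)) *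
                min 1 (δ x * δ y / dist x y ^ 2) *
                (min 1 (‖x‖ * ‖y‖ / dist x y ^ 2)) ^ (-H) +
              (‖x‖ * ‖y‖) ^ (-H) *
                |Real.log (min 1 (dist x y ^ 2 / (δ x * δ y)))|) *
              (‖y‖ ^ H * δ y ^ (-γ))) ∂ω},
        ENNReal.ofReal (δ x * ‖x‖ ^ (-H)))
      ≤ ENNReal.ofReal (C * t ^ (-(((N : ℝ) + γ) / ((N : ℝ) + γ - 2)))) *
          (ω (Ω \ {0})) ^ (((N : ℝ) + γ) / ((N : ℝ) + γ - 2))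
  clear_value δ
  set w : EuclideanSpace ℝ (Fin N) → ℝ := fun x => δ x * ‖x‖ ^ (-H) with hw
  have hwm : Measurable w := by rw [hw]; fun_prop
  set k1 : EuclideanSpace ℝ (Fin N) → EuclideanSpace ℝ (Fin N) → ℝ := fun x y =>
    dist x y ^ (-(2 * H)) * min 1 (δ x * δ y / dist x y ^ 2) *
                (min 1 (‖x‖ * ‖y‖ / dist x y ^ 2)) ^ (-H) * (‖y‖ ^ H * δ y ^ (-γ)) with hk1
  set k2 : EuclideanSpace ℝ (Fin N) → EuclideanSpace ℝ (Fin N) → ℝ := fun x y =>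
    (‖x‖ * ‖y‖) ^ (-H) * |Real.log (min 1 (dist x y ^ 2 / (δ x * δ y)))| *
      (‖y‖ ^ H * δ y ^ (-γ)) with hk2
  have hk1m : Measurable (fun z : EuclideanSpace ℝ (Fin N) × EuclideanSpace ℝ (Fin N) => k1 z.1 z.2) := by
    rw [hk1]; fun_prop
  have hk2m : Measurable (fun z : EuclideanSpace ℝ (Fin N) × EuclideanSpace ℝ (Fin N) => k2 z.1 z.2) := by
    have : Measurable (fun u : ℝ => |u|) := measurable_norm
    rw [hk2]; fun_prop
  simp only [add_mul]
  change ∃ C : ℝ, 0 < C ∧ ∀ (ω : Measure (EuclideanSpace ℝ (Fin N))), IsFiniteMeasure ω →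
      ∀ t : ℝ, 0 < t →
      (∫⁻ x in {x | x ∈ Ω \ {0} ∧ ENNReal.ofReal t <
          ∫⁻ y in Ω \ {0}, ENNReal.ofReal (k1 x y + k2 x y) ∂ω},
        ENNReal.ofReal (w x))
      ≤ ENNReal.ofReal (C * t ^ (-(((N : ℝ) + γ) / ((N : ℝ) + γ - 2)))) *
          (ω (Ω \ {0})) ^ (((N : ℝ) + γ) / ((N : ℝ) + γ - 2))
  -- constants
  obtain ⟨ε, hε⟩ : ∃ ε : ℝ, ε = 2 * H / (2 * H + 3) := ⟨_, rfl⟩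
  have hε0 : 0 < ε := by rw [hε]; positivity
  have hεe : ε * (2 * H + 3) = 2 * H := by rw [hε]; field_simp
  have hε1 : ε < 1 := by nlinarith
  obtain ⟨A1, hA1, HA1⟩ := K1_bound hH hγ0 hγ1 hD1
  obtain ⟨A2, hA2, HA2⟩ := K2_bound hH hγ0 hγ1 hD1 hε0
  obtain ⟨c, hc, hcR⟩ := radial_bound N hN H (by linarith)
  obtain ⟨V, hV⟩ : ∃ V : ℝ, V = D * (c * ρ ^ ((N : ℝ) - H)) := ⟨_, rfl⟩
  have hV0 : 0 < V := by rw [hV]; positivity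
  obtain ⟨C1, hC1, HC1⟩ := int_bound N hN (2 * H) (2 * H + γ) (2 / (N + γ)) A1 V
    (by linarith) (by positivity) (by positivity)
    (by
      rw [hNH, div_le_div_iff₀ (by positivity) (by linarith)]
      ring_nf
      exact le_rfl) hA1 hV0
  obtain ⟨C2, hC2, HC2⟩ := int_bound N hN (2 * H + ε) (H + γ + ε) (2 / (N + γ)) A2 V
    (by linarith) (by positivity) (by positivity)
    (by
      rw [hNH, div_le_div_iff₀ (by positivity) (by linarith)]
      have : ε * γ ≤ ε * 1 := by gcongr
      nlinarith) hA2 hV0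
  have hs : 2 < (N : ℝ) + γ := by linarith
  refine ⟨(C1 + C2) ^ (((N : ℝ) + γ) / ((N : ℝ) + γ - 2)), by positivity, ?_⟩
  intro ω hω t ht
  have hΩm : MeasurableSet (Ω \ {0}) := hΩo.measurableSet.diff (measurableSet_singleton 0)
  set S := Ω \ {(0 : EuclideanSpace ℝ (Fin N))} with hS
  set U : EuclideanSpace ℝ (Fin N) → ENNReal := fun x =>
    ∫⁻ y in S, ENNReal.ofReal (k1 x y + k2 x y) ∂ω with hU
  have hkm : Measurable (fun z : EuclideanSpace ℝ (Fin N) × EuclideanSpace ℝ (Fin N) =>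
      ENNReal.ofReal (k1 z.1 z.2 + k2 z.1 z.2)) := (hk1m.add hk2m).ennreal_ofReal
  have hUm : Measurable U := hkm.lintegral_prod_right'
  change ∫⁻ x in {x | x ∈ S ∧ ENNReal.ofReal t < U x}, ENNReal.ofReal (w x) ≤ _
  set E := {x | x ∈ S ∧ ENNReal.ofReal t < U x} with hE
  have hEm : MeasurableSet E := hΩm.inter (measurableSet_lt measurable_const hUm)
  have hES : ∀ x ∈ E, x ∈ S := fun x hx => hx.1
  have hS0 : ∀ x ∈ S, x ≠ 0 := fun x hx => hx.2
  have hSΩ : ∀ x ∈ S, x ∈ Ω := fun x hx => hx.1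
  have hw0 : ∀ x ∈ E, 0 ≤ w x := fun x hx =>
    mul_nonneg (hδpos x (hSΩ x (hES x hx))).le (by positivity)
  set W := ∫⁻ x in E, ENNReal.ofReal (w x) with hW
  have hWV : W ≤ ENNReal.ofReal V := by
    calc W ≤ ∫⁻ x in E, ENNReal.ofReal D *
          ENNReal.ofReal ((Iio ρ).indicator (fun s : ℝ => s ^ (-H)) (dist x 0)) := by
          refine setLIntegral_mono' hEm fun x hx => ?_
          have hxΩ := hSΩ x (hES x hx)
          rw [← ENNReal.ofReal_mul (by positivity)]
          apply ENNReal.ofReal_le_ofReal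
          rw [dist_zero_right, indicator_of_mem (show ‖x‖ ∈ Iio ρ from hnorm x hxΩ)]
          exact mul_le_mul_of_nonneg_right (hdD x hxΩ) (by positivity)
      _ ≤ ENNReal.ofReal D * ENNReal.ofReal (c * ρ ^ ((N : ℝ) - H)) := by
          rw [lintegral_const_mul' _ _ ENNReal.ofReal_ne_top]
          gcongr
          exact (setLIntegral_le_lintegral _ _).trans (hcR ρ hρ0 0)
      _ = _ := by rw [← ENNReal.ofReal_mul (by positivity), hV]
  have hWt : W ≠ ⊤ := (hWV.trans_lt ENNReal.ofReal_lt_top).ne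
  apply final_alg hs (by positivity) ht W _ hWt (measure_ne_top ω S)
  -- inner bound
  have inner : ∀ y ∈ S, ∫⁻ x in E, ENNReal.ofReal (k1 x y + k2 x y) * ENNReal.ofReal (w x) ≤
      ENNReal.ofReal (C1 + C2) * W ^ (2 / ((N : ℝ) + γ)) := by
    intro y hy
    have hyΩ := hSΩ y hy
    have hy0 : 0 < ‖y‖ := norm_pos_iff.2 (hS0 y hy)
    have B1 := HC1 E y w (fun x => k1 x y) hEm hwm hw0 (fun x hx => hS0 x (hES x hx))
      (fun x hx hxy => by
        have hxS := hES x hx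
        have hx0 : 0 < ‖x‖ := norm_pos_iff.2 (hS0 x hxS)
        have hxΩ := hSΩ x hxS
        have hr : 0 < dist x y := dist_pos.2 hxy
        have htri : ‖y‖ ≤ ‖x‖ + dist x y := by
          have := norm_le_norm_add_norm_sub x y
          rwa [← dist_eq_norm] at this
        rw [dist_zero_right]
        exact (HA1 (dist x y) ‖x‖ ‖y‖ (δ x) (δ y) (min (dist x y) ‖x‖) hr hx0 hy0 (hδpos x hxΩ)
          (hδpos y hyΩ) (lt_min hr hx0) (min_le_left _ _) (min_le_right _ _) (hXD x hxΩ) (hXD y hyΩ)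
          (hdD x hxΩ) htri (hδlip x y)).2)
      (fun x hx hxy => by
        have hxS := hES x hx
        have hx0 : 0 < ‖x‖ := norm_pos_iff.2 (hS0 x hxS)
        have hxΩ := hSΩ x hxS
        have hr : 0 < dist x y := dist_pos.2 hxy
        have htri : ‖y‖ ≤ ‖x‖ + dist x y := by
          have := norm_le_norm_add_norm_sub x y
          rwa [← dist_eq_norm] at this
        rw [dist_zero_right]
        exact (HA1 (dist x y) ‖x‖ ‖y‖ (δ x) (δ y) (min (dist x y) ‖x‖) hr hx0 hy0 (hδpos x hxΩ)
          (hδpos y hyΩ) (lt_min hr hx0) (min_le_left _ _) (min_le_right _ _) (hXD x hxΩ) (hXD y hyΩ)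
          (hdD x hxΩ) htri (hδlip x y)).1)
      hWV
    have B2 := HC2 E y w (fun x => k2 x y) hEm hwm hw0 (fun x hx => hS0 x (hES x hx))
      (fun x hx hxy => by
        have hxS := hES x hx
        have hx0 : 0 < ‖x‖ := norm_pos_iff.2 (hS0 x hxS)
        have hxΩ := hSΩ x hxS
        have hr : 0 < dist x y := dist_pos.2 hxy
        rw [dist_zero_right]
        exact (HA2 (dist x y) ‖x‖ ‖y‖ (δ x) (δ y) (min (dist x y) ‖x‖) hr hx0 hy0 (hδpos x hxΩ)
          (hδpos y hyΩ) (lt_min hr hx0) (min_le_left _ _) (min_le_right _ _)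
          (hdD x hxΩ) (hdD y hyΩ) (hδlip x y)).2)
      (fun x hx hxy => by
        have hxS := hES x hx
        have hx0 : 0 < ‖x‖ := norm_pos_iff.2 (hS0 x hxS)
        have hxΩ := hSΩ x hxS
        have hr : 0 < dist x y := dist_pos.2 hxy
        rw [dist_zero_right]
        exact (HA2 (dist x y) ‖x‖ ‖y‖ (δ x) (δ y) (min (dist x y) ‖x‖) hr hx0 hy0 (hδpos x hxΩ)
          (hδpos y hyΩ) (lt_min hr hx0) (min_le_left _ _) (min_le_right _ _)
          (hdD x hxΩ) (hdD y hyΩ) (hδlip x y)).1)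
      hWV
    have hm1 : Measurable (fun x => ENNReal.ofReal (k1 x y * w x)) :=
      ((hk1m.comp (measurable_id.prodMk measurable_const)).mul hwm).ennreal_ofReal
    calc _ ≤ ∫⁻ x in E, (ENNReal.ofReal (k1 x y * w x) + ENNReal.ofReal (k2 x y * w x)) := by
          refine setLIntegral_mono' hEm fun x hx => ?_
          rw [← ENNReal.ofReal_mul' (hw0 x hx), add_mul]
          exact ENNReal.ofReal_add_le
      _ = _ := lintegral_add_left hm1 _
      _ ≤ _ := add_le_add B1 B2
      _ = _ := by rw [← add_mul, ENNReal.ofReal_add hC1.le hC2.le]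
  calc ENNReal.ofReal t * W = ∫⁻ x in E, ENNReal.ofReal t * ENNReal.ofReal (w x) :=
        (lintegral_const_mul' _ _ ENNReal.ofReal_ne_top).symm
    _ ≤ ∫⁻ x in E, ∫⁻ y in S, ENNReal.ofReal (k1 x y + k2 x y) * ENNReal.ofReal (w x) ∂ω := by
        refine setLIntegral_mono' hEm fun x hx => ?_
        rw [lintegral_mul_const' _ _ ENNReal.ofReal_ne_top]
        gcongr
        exact hx.2.le
    _ = ∫⁻ y in S, (∫⁻ x in E, ENNReal.ofReal (k1 x y + k2 x y) * ENNReal.ofReal (w x)) ∂ω := by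
        apply lintegral_lintegral_swap
        exact (hkm.mul (hwm.ennreal_ofReal.comp measurable_fst)).aemeasurable
    _ ≤ ∫⁻ y in S, ENNReal.ofReal (C1 + C2) * W ^ (2 / ((N : ℝ) + γ)) ∂ω :=
        setLIntegral_mono' hΩm inner
    _ = _ := by rw [setLIntegral_const]
end

section
/- Let N > 2 be an integer, Ω ⊂ ℝ^N a nonempty bounded open set with 0 ∈ Ω, let a ≥ 0, 0 ≤ κ ≤ a and 0 ≤ γ ≤ 1, and set p = min{ (N+κ)/(N+κ−2), (N+γ)/(N+γ−2) }. Then there exists C = C(N, Ω, a, κ, γ) > 0 such that for every finite positive Borel measure ω on Ω ∖ {0} and every λ > 0: ∫_{{x ∈ Ω∖{0} : U(x) > λ}} d(x)|x|^{a} dx ≤ C λ^{−p} ω(Ω∖{0})^p, where U(x) = ∫_{Ω∖{0}} |x−y|^{2−N} · min{1, d(x)d(y)/|x−y|^2} · ( min{1, |x||y|/|x−y|^2} )^{a} · |y|^{−κ} d(y)^{−γ} dω(y). -/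
open MeasureTheory Metric Set

lemma riesz_bound (N : ℕ) (hN : 2 < N) : ∃ B : ℝ, 0 < B ∧
    ∀ (y : EuclideanSpace ℝ (Fin N)) (R : ℝ), 0 < R →
    ∫⁻ x in ball y R, ENNReal.ofReal (dist x y ^ (2 - (N : ℝ))) ≤ ENNReal.ofReal (B * R ^ 2) := by
  have : Nonempty (Fin N) := ⟨⟨0, by omega⟩⟩
  set V : ℝ := volume.real (ball (0 : EuclideanSpace ℝ (Fin N)) 1) with hV
  have hV0 : 0 ≤ V := measureReal_nonneg
  refine ⟨N * V + 1, by positivity, fun y R hR => ?_⟩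
  let f : ℝ → ℝ := (Iio R).indicator (fun s => s ^ (2 - (N : ℝ)))
  have e1 : ∫⁻ x in ball y R, ENNReal.ofReal (dist x y ^ (2 - (N : ℝ)))
      = ∫⁻ x : EuclideanSpace ℝ (Fin N), ENNReal.ofReal (f ‖x‖) := by
    rw [← lintegral_sub_right_eq_self (fun x => ENNReal.ofReal (f ‖x‖)) y,
      ← lintegral_indicator measurableSet_ball]
    congr 1
    ext x
    by_cases h : dist x y < R
    · simp [indicator, h, f, ← dist_eq_norm]
    · simp [indicator, h, f, ← dist_eq_norm]
  have e2 : ∀ s ∈ Ioi (0:ℝ), s ^ (N - 1) • f s = (Iio R).indicator (fun s => s) s := by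
    intro s hs
    simp only [f, indicator]
    split_ifs
    · have : (0:ℝ) < s := hs
      rw [smul_eq_mul, ← Real.rpow_natCast, ← Real.rpow_add this, Nat.cast_sub (by omega)]
      have : ((N:ℝ) - (1:ℕ) + (2 - N)) = 1 := by push_cast; ring
      rw [this, Real.rpow_one]
    · simp
  have hfin : Module.finrank ℝ (EuclideanSpace ℝ (Fin N)) = N := by simp
  have i1 : IntegrableOn ((Iio R).indicator (fun s : ℝ => s)) (Ioi 0) := by
    rw [IntegrableOn, integrable_indicator_iff measurableSet_Iio, IntegrableOn,
      Measure.restrict_restrict measurableSet_Iio]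
    have : IntegrableOn (fun s : ℝ => s) (Icc 0 R) := continuous_id.integrableOn_Icc
    refine this.mono_set ?_
    rintro s ⟨h1, h2⟩
    exact ⟨le_of_lt h2, le_of_lt h1⟩
  have i2 : Integrable (fun x : EuclideanSpace ℝ (Fin N) => f ‖x‖) := by
    rw [integrable_fun_norm_addHaar volume (f := f), hfin]
    exact (integrableOn_congr_fun e2 measurableSet_Ioi).2 i1
  have hf0 : ∀ x : EuclideanSpace ℝ (Fin N), 0 ≤ f ‖x‖ := by
    intro x
    apply indicator_apply_nonneg
    intro _; positivity
  rw [e1, ← ofReal_integral_eq_lintegral_ofReal i2 (.of_forall hf0)]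
  apply ENNReal.ofReal_le_ofReal
  rw [integral_fun_norm_addHaar, hfin, setIntegral_congr_fun measurableSet_Ioi e2, 
    setIntegral_indicator measurableSet_Iio, Ioi_inter_Iio, ← integral_Ioc_eq_integral_Ioo,
    ← intervalIntegral.integral_of_le hR.le, integral_id, ← hV]
  simp only [nsmul_eq_mul, smul_eq_mul]
  have : 0 ≤ N * V * R^2 := by positivity
  nlinarith [sq_nonneg R]

lemma two_point {A B r e b : ℝ} (hA : 0 ≤ A) (hB : 0 < B) (hr : 0 < r) (h : A ≤ B + r)
    (hb : 0 ≤ b) (hbe : b ≤ e) :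
    (min 1 (A * B / r ^ 2)) ^ e * B ^ (-b) ≤ 2 ^ b * r ^ (-b) ∧
    (min 1 (A * B / r ^ 2)) ^ e * B ^ (-b) * A ^ b ≤ 4 ^ b := by
  set m := min 1 (A * B / r ^ 2) with hm
  have hm0 : 0 ≤ m := by positivity
  have hm1 : m ≤ 1 := min_le_left _ _
  have hm2 : m ≤ A * B / r ^ 2 := min_le_right _ _
  have hme : m ^ e ≤ m ^ b := by
    rcases hm0.eq_or_lt with h0 | h0
    · rcases hb.eq_or_lt with hb0 | hb0
      · rw [← hb0, Real.rpow_zero]; exact Real.rpow_le_one hm0 hm1 (hb.trans hbe)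
      · rw [← h0, Real.zero_rpow hb0.ne', Real.zero_rpow (hb0.trans_le hbe).ne']
    · exact Real.rpow_le_rpow_of_exponent_ge h0 hm1 hbe
  have hm3 : m ≤ 2 * B / r := by
    rcases le_total r B with h1 | h1
    · refine hm1.trans ?_
      rw [le_div_iff₀ hr]; linarith
    · refine hm2.trans ?_
      rw [div_le_div_iff₀ (by positivity) hr]
      have : A * (B * r) ≤ (2 * r) * (B * r) := by gcongr; linarith
      nlinarith
  have hm4 : m * A ≤ 4 * B := by
    rcases le_total r B with h1 | h1
    · have : m * A ≤ 1 * A := by gcongr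
      linarith
    · have h2 : m * A ≤ A * B / r ^ 2 * A := by gcongr
      refine h2.trans ?_
      rw [div_mul_eq_mul_div, div_le_iff₀ (by positivity)]
      have : A * A * B ≤ (2 * r) * (2 * r) * B := by gcongr <;> linarith
      nlinarith
  have hBb : B ^ b * B ^ (-b) = 1 := by rw [← Real.rpow_add hB]; simp
  constructor
  · calc m ^ e * B ^ (-b) ≤ m ^ b * B ^ (-b) := by gcongr
      _ ≤ (2 * B / r) ^ b * B ^ (-b) := by gcongr
      _ = 2 ^ b * r ^ (-b) * (B ^ b * B ^ (-b)) := by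
        rw [Real.div_rpow (by positivity) hr.le, Real.mul_rpow (by norm_num) hB.le,
          Real.rpow_neg hr.le]
        ring
      _ = _ := by rw [hBb, mul_one]
  · calc m ^ e * B ^ (-b) * A ^ b ≤ m ^ b * B ^ (-b) * A ^ b := by gcongr
      _ = (m * A) ^ b * B ^ (-b) := by rw [Real.mul_rpow hm0 hA]; ring
      _ ≤ (4 * B) ^ b * B ^ (-b) := by gcongr
      _ = 4 ^ b * (B ^ b * B ^ (-b)) := by rw [Real.mul_rpow (by norm_num) hB.le]; ring
      _ = _ := by rw [hBb, mul_one]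

lemma kernel_bounds (N : ℕ) (hN : 2 < N)
    (Ω : Set (EuclideanSpace ℝ (Fin N)))
    (hΩo : IsOpen Ω) (hΩb : Bornology.IsBounded Ω) (h0 : (0 : EuclideanSpace ℝ (Fin N)) ∈ Ω)
    (a κ γ q : ℝ) (hκ0 : 0 ≤ κ) (hκa : κ ≤ a) (hγ0 : 0 ≤ γ) (hγ1 : γ ≤ 1)
    (hκq : κ ≤ q) (hγq : γ ≤ q) :
    ∃ C L : ℝ, 0 < C ∧ 0 < L ∧ ∀ x ∈ Ω \ {0}, 
      infDist x (frontier Ω) * ‖x‖ ^ a ≤ L ∧ ∀ y ∈ Ω \ {0},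
      (dist x y ^ (2 - (N : ℝ)) *
              min 1 (infDist x (frontier Ω) * infDist y (frontier Ω) / dist x y ^ 2) *
              (min 1 (‖x‖ * ‖y‖ / dist x y ^ 2)) ^ a *
              (‖y‖ ^ (-κ) * infDist y (frontier Ω) ^ (-γ)) ≤ C * dist x y ^ (2 - (N : ℝ) - q)) ∧
      (infDist x (frontier Ω) * ‖x‖ ^ a * (dist x y ^ (2 - (N : ℝ)) *
              min 1 (infDist x (frontier Ω) * infDist y (frontier Ω) / dist x y ^ 2) *
              (min 1 (‖x‖ * ‖y‖ / dist x y ^ 2)) ^ a *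
              (‖y‖ ^ (-κ) * infDist y (frontier Ω) ^ (-γ))) ≤ C * dist x y ^ (2 - (N : ℝ))) := by
  have hne : Nonempty (Fin N) := ⟨⟨0, by omega⟩⟩
  have hnt : Nontrivial (EuclideanSpace ℝ (Fin N)) := by
    have : Module.finrank ℝ (EuclideanSpace ℝ (Fin N)) = N := by simp
    exact Module.nontrivial_of_finrank_pos (R := ℝ) (by omega)
  have hfr : (frontier Ω).Nonempty := by
    rw [nonempty_frontier_iff]
    refine ⟨⟨0, h0⟩, ?_⟩
    rintro rfl
    exact NormedSpace.unbounded_univ ℝ (EuclideanSpace ℝ (Fin N)) hΩb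
  have hdpos : ∀ x ∈ Ω, 0 < infDist x (frontier Ω) := by
    intro x hx
    rw [← isClosed_frontier.notMem_iff_infDist_pos hfr]
    intro h
    have : x ∈ Ω ∩ frontier Ω := ⟨hx, h⟩
    rw [hΩo.inter_frontier_eq] at this
    exact this
  obtain ⟨D, hD0, hD⟩ := hΩb.exists_pos_norm_le
  set d0 := infDist (0 : EuclideanSpace ℝ (Fin N)) (frontier Ω) with hd0
  have hd0p : 0 < d0 := hdpos 0 h0
  set L := d0 + D with hL
  have hLp : 0 < L := by positivity
  set c := d0 / 2 with hc
  have hcp : 0 < c := by positivity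
  set C1 : ℝ := c ^ (-γ) * (2 ^ κ * (2 * L) ^ (q - κ)) with hC1
  set C2 : ℝ := (2 ^ γ * (2 * L) ^ (q - γ)) * c ^ (-κ) with hC2
  set C3 : ℝ := L ^ (1 - γ) * L ^ (a - κ) * 4 ^ γ * 4 ^ κ with hC3
  have hC1p : 0 < C1 := by positivity
  have hC2p : 0 < C2 := by positivity
  have hC3p : 0 < C3 := by positivity
  refine ⟨C1 + C2 + C3, L * L ^ a, by positivity, by positivity, fun x hx => ?_⟩
  have hdx := hdpos x hx.1
  have hxp : 0 < ‖x‖ := norm_pos_iff.2 hx.2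
  have hxL : ‖x‖ ≤ L := (hD x hx.1).trans (by linarith)
  have hdxL : infDist x (frontier Ω) ≤ L := by
    have h1 := infDist_le_infDist_add_dist (s := frontier Ω) (x := x) (y := 0)
    rw [dist_zero_right] at h1
    have := hD x hx.1
    linarith
  have ha : 0 ≤ a := hκ0.trans hκa
  refine ⟨by gcongr, fun y hy => ?_⟩
  have hdy := hdpos y hy.1
  have hyp : 0 < ‖y‖ := norm_pos_iff.2 hy.2
  have hyL : ‖y‖ ≤ L := (hD y hy.1).trans (by linarith)
  have hN' : (2:ℝ) < N := by exact_mod_cast hN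
  have t1 := infDist_le_infDist_add_dist (s := frontier Ω) (x := x) (y := y)
  have t2 : ‖x‖ ≤ ‖y‖ + dist x y := by
    rw [dist_eq_norm]; have := norm_le_norm_add_norm_sub' x y; linarith
  have t3 : dist x y ≤ 2 * L := by
    have := dist_le_norm_add_norm x y; linarith
  have t4 := infDist_le_infDist_add_dist (s := frontier Ω) (x := 0) (y := y)
  rw [dist_zero_left] at t4
  rcases (dist_nonneg (x := x) (y := y)).eq_or_lt with hr | hr
  · rw [← hr, Real.zero_rpow (by linarith), Real.zero_rpow (by linarith)]
    simp
  generalize dist x y = r at *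
  generalize infDist x (frontier Ω) = A at *
  generalize infDist y (frontier Ω) = B at *
  obtain ⟨f1, f2⟩ := two_point hdx.le hdy hr t1 hγ0 hγ1
  obtain ⟨g1, g2⟩ := two_point hxp.le hyp hr t2 hκ0 hκa
  rw [Real.rpow_one] at f1 f2
  have m1 : min 1 (A * B / r ^ 2) ≤ 1 := min_le_left _ _
  have m10 : 0 ≤ min 1 (A * B / r ^ 2) := by positivity
  have m20 : 0 ≤ min 1 (‖x‖ * ‖y‖ / r ^ 2) := by positivity
  have m2 : (min 1 (‖x‖ * ‖y‖ / r ^ 2)) ^ a ≤ 1 := Real.rpow_le_one m20 (min_le_left _ _) ha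
  have m2' : 0 ≤ (min 1 (‖x‖ * ‖y‖ / r ^ 2)) ^ a := by positivity
  generalize min 1 (A * B / r ^ 2) = u at *
  generalize (min 1 (‖x‖ * ‖y‖ / r ^ 2)) ^ a = v at *
  have hrq : ∀ s, s ≤ q → r ^ (-s) ≤ (2 * L) ^ (q - s) * r ^ (-q) := by
    intro s hs
    have : r ^ (-s) = r ^ (q - s) * r ^ (-q) := by
      rw [← Real.rpow_add hr]; congr 1; ring
    rw [this]
    have : 0 ≤ q - s := by linarith
    gcongr
  have hFG : (u * B ^ (-γ)) * (v * ‖y‖ ^ (-κ)) ≤ (C1 + C2 + C3) * r ^ (-q) := by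
    have hrp : 0 < r ^ (-q) := by positivity
    rcases le_total c B with h1 | h1
    · have : u * B ^ (-γ) ≤ c ^ (-γ) := by
        calc u * B ^ (-γ) ≤ 1 * c ^ (-γ) := by
              gcongr ?_ * ?_
              exact Real.rpow_le_rpow_of_nonpos hcp h1 (by linarith)
          _ = _ := one_mul _
      calc (u * B ^ (-γ)) * (v * ‖y‖ ^ (-κ)) ≤ c ^ (-γ) * (2 ^ κ * r ^ (-κ)) := by gcongr
        _ ≤ c ^ (-γ) * (2 ^ κ * ((2 * L) ^ (q - κ) * r ^ (-q))) := by
          gcongr; exact hrq κ hκq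
        _ = C1 * r ^ (-q) := by rw [hC1]; ring
        _ ≤ _ := by gcongr; linarith
    · have h2 : c ≤ ‖y‖ := by linarith
      have : v * ‖y‖ ^ (-κ) ≤ c ^ (-κ) := by
        calc v * ‖y‖ ^ (-κ) ≤ 1 * c ^ (-κ) := by
              gcongr ?_ * ?_
              exact Real.rpow_le_rpow_of_nonpos hcp h2 (by linarith)
          _ = _ := one_mul _
      calc (u * B ^ (-γ)) * (v * ‖y‖ ^ (-κ)) ≤ (2 ^ γ * r ^ (-γ)) * c ^ (-κ) := by gcongr
        _ ≤ (2 ^ γ * ((2 * L) ^ (q - γ) * r ^ (-q))) * c ^ (-κ) := by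
          gcongr; exact hrq γ hγq
        _ = C2 * r ^ (-q) := by rw [hC2]; ring
        _ ≤ _ := by gcongr; linarith
  constructor
  · calc r ^ (2 - (N:ℝ)) * u * v * (‖y‖ ^ (-κ) * B ^ (-γ))
        = r ^ (2 - (N:ℝ)) * ((u * B ^ (-γ)) * (v * ‖y‖ ^ (-κ))) := by ring
      _ ≤ r ^ (2 - (N:ℝ)) * ((C1 + C2 + C3) * r ^ (-q)) := by gcongr
      _ = (C1 + C2 + C3) * (r ^ (2 - (N:ℝ)) * r ^ (-q)) := by ring
      _ = _ := by rw [← Real.rpow_add hr]; rfl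
  · have w1 : A ≤ L ^ (1 - γ) * A ^ γ := by
      calc A = A ^ (1 - γ) * A ^ γ := by rw [← Real.rpow_add hdx]; simp
        _ ≤ _ := by
          have : 0 ≤ 1 - γ := by linarith
          gcongr
    have w2 : ‖x‖ ^ a ≤ L ^ (a - κ) * ‖x‖ ^ κ := by
      calc ‖x‖ ^ a = ‖x‖ ^ (a - κ) * ‖x‖ ^ κ := by rw [← Real.rpow_add hxp]; simp
        _ ≤ _ := by
          have : 0 ≤ a - κ := by linarith
          gcongr
    calc A * ‖x‖ ^ a * (r ^ (2 - (N:ℝ)) * u * v * (‖y‖ ^ (-κ) * B ^ (-γ)))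
        ≤ (L ^ (1 - γ) * A ^ γ) * (L ^ (a - κ) * ‖x‖ ^ κ) *
          (r ^ (2 - (N:ℝ)) * u * v * (‖y‖ ^ (-κ) * B ^ (-γ))) := by gcongr
      _ = (L ^ (1 - γ) * L ^ (a - κ)) * (u * B ^ (-γ) * A ^ γ) *
          (v * ‖y‖ ^ (-κ) * ‖x‖ ^ κ) * r ^ (2 - (N:ℝ)) := by ring
      _ ≤ (L ^ (1 - γ) * L ^ (a - κ)) * 4 ^ γ * 4 ^ κ * r ^ (2 - (N:ℝ)) := by gcongr
      _ ≤ _ := by rw [← hC3]; gcongr; linarith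

lemma final_arith {t m w C n : ℝ} (ht : 0 < t) (hm : 0 < m) (hw : 0 ≤ w) (hC : 0 < C) (hn : 2 < n)
    (h : t * m ≤ C * (m ^ (1 / n)) ^ 2 * w) :
    m ≤ C ^ (n / (n - 2)) * t ^ (-(n / (n - 2))) * w ^ (n / (n - 2)) := by
  set R := m ^ (1 / n) with hR
  have hRp : 0 < R := by positivity
  have hmR : m = R ^ n := by
    rw [hR, ← Real.rpow_mul hm.le, one_div, inv_mul_cancel₀ (by linarith), Real.rpow_one]
  have hsplit : R ^ n = R ^ (n - 2) * R ^ 2 := by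
    rw [← Real.rpow_natCast R 2, ← Real.rpow_add hRp]; congr 1; push_cast; ring
  have h1 : R ^ (n - 2) ≤ C * w / t := by
    rw [le_div_iff₀ ht]
    rw [hmR, hsplit] at h
    have : 0 < R ^ 2 := by positivity
    refine le_of_mul_le_mul_right ?_ this
    nlinarith
  have hp : 0 ≤ n / (n - 2) := div_nonneg (by linarith) (by linarith)
  calc m = (R ^ (n - 2)) ^ (n / (n - 2)) := by
        rw [hmR, ← Real.rpow_mul hRp.le, mul_div_cancel₀ _ (by linarith)]
    _ ≤ (C * w / t) ^ (n / (n - 2)) := by gcongr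
    _ = _ := by
      rw [Real.div_rpow (by positivity) ht.le, Real.mul_rpow hC.le hw, Real.rpow_neg ht.le]
      ring

lemma min_exp (N : ℕ) (hN : 2 < N) (κ γ : ℝ) (hκ0 : 0 ≤ κ) (hγ0 : 0 ≤ γ) :
    min (((N : ℝ) + κ) / ((N : ℝ) + κ - 2)) (((N : ℝ) + γ) / ((N : ℝ) + γ - 2)) =
      (N + max κ γ) / (N + max κ γ - 2) := by
  have hN' : (2:ℝ) < N := by exact_mod_cast hN
  rcases le_total κ γ with h | h
  · rw [max_eq_right h, min_eq_right]
    rw [div_le_div_iff₀ (by linarith) (by linarith)]; nlinarith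
  · rw [max_eq_left h, min_eq_left]
    rw [div_le_div_iff₀ (by linarith) (by linarith)]; nlinarith

/-- Weak Lebesgue estimate for the Green-type potential of `Δ + μ|x|^{−2}` with
`μ ≤ 0` (so `a = √(((N−2)/2)² − μ) − (N−2)/2 ≥ 0`) against the measure
`|y|^{−κ} d(y)^{−γ} dω(y)`, with respect to the weight `d(x)|x|^{a}` and exponent
`p = min{(N+κ)/(N+κ−2), (N+γ)/(N+γ−2)}`. -/
theorem weak_estimate_green_nonpositive (N : ℕ) (hN : 2 < N)
    (Ω : Set (EuclideanSpace ℝ (Fin N)))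
    (hΩo : IsOpen Ω) (hΩb : Bornology.IsBounded Ω) (h0 : (0 : EuclideanSpace ℝ (Fin N)) ∈ Ω)
    (a κ γ : ℝ) (ha : 0 ≤ a) (hκ0 : 0 ≤ κ) (hκa : κ ≤ a) (hγ0 : 0 ≤ γ) (hγ1 : γ ≤ 1) :
    ∃ C : ℝ, 0 < C ∧ ∀ (ω : Measure (EuclideanSpace ℝ (Fin N))), IsFiniteMeasure ω →
      ∀ t : ℝ, 0 < t →
      (∫⁻ x in {x | x ∈ Ω \ {0} ∧ ENNReal.ofReal t <
          ∫⁻ y in Ω \ {0}, ENNReal.ofReal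
            (dist x y ^ (2 - (N : ℝ)) *
              min 1 (infDist x (frontier Ω) * infDist y (frontier Ω) / dist x y ^ 2) *
              (min 1 (‖x‖ * ‖y‖ / dist x y ^ 2)) ^ a *
              (‖y‖ ^ (-κ) * infDist y (frontier Ω) ^ (-γ))) ∂ω},
        ENNReal.ofReal (infDist x (frontier Ω) * ‖x‖ ^ a))
      ≤ ENNReal.ofReal (C * t ^ (-(min (((N : ℝ) + κ) / ((N : ℝ) + κ - 2))
            (((N : ℝ) + γ) / ((N : ℝ) + γ - 2))))) *
          (ω (Ω \ {0})) ^ (min (((N : ℝ) + κ) / ((N : ℝ) + κ - 2))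
            (((N : ℝ) + γ) / ((N : ℝ) + γ - 2))) := by
  have hN' : (2:ℝ) < N := by exact_mod_cast hN
  rw [min_exp N hN κ γ hκ0 hγ0]
  set q := max κ γ with hq
  have hq0 : 0 ≤ q := hκ0.trans (le_max_left _ _)
  obtain ⟨B, hB, hriesz⟩ := riesz_bound N hN
  obtain ⟨C, L, hC, hL, hker⟩ := kernel_bounds N hN Ω hΩo hΩb h0 a κ γ q hκ0 hκa hγ0 hγ1
    (le_max_left _ _) (le_max_right _ _)
  set K : EuclideanSpace ℝ (Fin N) → EuclideanSpace ℝ (Fin N) → ℝ := fun x y =>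
    (dist x y ^ (2 - (N : ℝ)) *
              min 1 (infDist x (frontier Ω) * infDist y (frontier Ω) / dist x y ^ 2) *
              (min 1 (‖x‖ * ‖y‖ / dist x y ^ 2)) ^ a *
              (‖y‖ ^ (-κ) * infDist y (frontier Ω) ^ (-γ))) with hK
  set W : EuclideanSpace ℝ (Fin N) → ℝ := fun x => infDist x (frontier Ω) * ‖x‖ ^ a with hW
  change ∀ x ∈ Ω \ {0}, W x ≤ L ∧ ∀ y ∈ Ω \ {0}, K x y ≤ C * dist x y ^ (2 - (N : ℝ) - q) ∧
    W x * K x y ≤ C * dist x y ^ (2 - (N : ℝ)) at hker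
  have hW0 : ∀ x, 0 ≤ W x := fun x => mul_nonneg infDist_nonneg (by positivity)
  have hWm : Measurable W := by
    apply Measurable.mul
    · exact measurable_infDist
    · exact measurable_norm.pow_const a
  have hKm : Measurable (Function.uncurry K) := by
    have m1 : Measurable fun z : EuclideanSpace ℝ (Fin N) × EuclideanSpace ℝ (Fin N) =>
      dist z.1 z.2 := measurable_dist
    have m2 : Measurable fun z : EuclideanSpace ℝ (Fin N) × EuclideanSpace ℝ (Fin N) =>
      infDist z.1 (frontier Ω) := measurable_infDist.comp measurable_fst
    have m3 : Measurable fun z : EuclideanSpace ℝ (Fin N) × EuclideanSpace ℝ (Fin N) =>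
      infDist z.2 (frontier Ω) := measurable_infDist.comp measurable_snd
    have m4 : Measurable fun z : EuclideanSpace ℝ (Fin N) × EuclideanSpace ℝ (Fin N) =>
      ‖z.1‖ := measurable_fst.norm
    have m5 : Measurable fun z : EuclideanSpace ℝ (Fin N) × EuclideanSpace ℝ (Fin N) =>
      ‖z.2‖ := measurable_snd.norm
    exact (((m1.pow_const _).mul (measurable_const.min ((m2.mul m3).div (m1.pow_const 2)))).mul
      ((measurable_const.min ((m4.mul m5).div (m1.pow_const 2))).pow_const a)).mul
      ((m5.pow_const _).mul (m3.pow_const _))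
  have hYm : MeasurableSet (Ω \ {0}) := hΩo.measurableSet.diff (measurableSet_singleton 0)
  set C2 := C * (B + 1) with hC2
  have hC2p : 0 < C2 := by positivity
  refine ⟨C2 ^ ((N + q) / (N + q - 2)), by positivity, fun ω hω t ht => ?_⟩
  set U : EuclideanSpace ℝ (Fin N) → ENNReal := fun x =>
    ∫⁻ y in Ω \ {0}, ENNReal.ofReal (K x y) ∂ω with hU
  set E : Set (EuclideanSpace ℝ (Fin N)) := {x | x ∈ Ω \ {0} ∧ ENNReal.ofReal t < U x} with hE
  change ∫⁻ x in E, ENNReal.ofReal (W x) ≤ _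
  have hUm : Measurable U := by
    apply Measurable.lintegral_prod_right
    exact hKm.ennreal_ofReal
  have hEm : MeasurableSet E := hYm.inter (measurableSet_lt measurable_const hUm)
  set M := ∫⁻ x in E, ENNReal.ofReal (W x) with hM
  have hMtop : M ≠ ⊤ := by
    have h1 : M ≤ ∫⁻ x in E, ENNReal.ofReal L := by
      apply setLIntegral_mono measurable_const
      intro x hx
      exact ENNReal.ofReal_le_ofReal (hker x hx.1).1
    rw [setLIntegral_const] at h1
    have h2 : volume E < ⊤ :=
      (measure_mono (fun x hx => hx.1.1)).trans_lt hΩb.measure_lt_top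
    exact (h1.trans_lt (ENNReal.mul_lt_top ENNReal.ofReal_lt_top h2)).ne
  by_cases hM0 : M = 0
  · rw [hM0]; exact zero_le
  set m := M.toReal with hm
  have hmp : 0 < m := ENNReal.toReal_pos hM0 hMtop
  have hMm : M = ENNReal.ofReal m := (ENNReal.ofReal_toReal hMtop).symm
  set R := m ^ (1 / (N + q)) with hR
  have hRp : 0 < R := by positivity
  have hmR : m = R ^ (N + q) := by
    rw [hR, ← Real.rpow_mul hmp.le, one_div, inv_mul_cancel₀ (by linarith), Real.rpow_one]
  have hinner : ∀ y ∈ Ω \ {0}, ∫⁻ x in E, ENNReal.ofReal (W x) * ENNReal.ofReal (K x y)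
      ≤ ENNReal.ofReal (C2 * R ^ 2) := by
    intro y hy
    have hb : ∀ x ∈ E, ENNReal.ofReal (W x) * ENNReal.ofReal (K x y) ≤
        ENNReal.ofReal C * (ball y R).indicator
          (fun x => ENNReal.ofReal (dist x y ^ (2 - (N : ℝ)))) x +
        ENNReal.ofReal (C * R ^ (2 - (N : ℝ) - q)) * ENNReal.ofReal (W x) := by
      intro x hx
      obtain ⟨k1, k2⟩ := (hker x hx.1).2 y hy
      by_cases hxy : x ∈ ball y R
      · rw [indicator_of_mem hxy, ← ENNReal.ofReal_mul (hW0 x), ← ENNReal.ofReal_mul hC.le]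
        exact (ENNReal.ofReal_le_ofReal k2).trans le_self_add
      · rw [indicator_of_notMem hxy, mul_zero, zero_add, mul_comm]
        gcongr
        refine k1.trans ?_
        have : R ≤ dist x y := by simpa using hxy
        gcongr ?_ * ?_
        exact Real.rpow_le_rpow_of_nonpos hRp this (by linarith)
    have hmeas : Measurable fun x => ENNReal.ofReal C * (ball y R).indicator
          (fun x => ENNReal.ofReal (dist x y ^ (2 - (N : ℝ)))) x := by
      apply Measurable.const_mul
      apply Measurable.indicator _ measurableSet_ball
      exact ((measurable_id.dist measurable_const).pow_const _).ennreal_ofReal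
    calc ∫⁻ x in E, ENNReal.ofReal (W x) * ENNReal.ofReal (K x y)
        ≤ ∫⁻ x in E, (ENNReal.ofReal C * (ball y R).indicator
          (fun x => ENNReal.ofReal (dist x y ^ (2 - (N : ℝ)))) x +
        ENNReal.ofReal (C * R ^ (2 - (N : ℝ) - q)) * ENNReal.ofReal (W x)) :=
          setLIntegral_mono' hEm hb
      _ = (∫⁻ x in E, ENNReal.ofReal C * (ball y R).indicator
          (fun x => ENNReal.ofReal (dist x y ^ (2 - (N : ℝ)))) x) +
        ENNReal.ofReal (C * R ^ (2 - (N : ℝ) - q)) * M := by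
          rw [lintegral_add_left hmeas, lintegral_const_mul' _ _ ENNReal.ofReal_ne_top,
            lintegral_const_mul' _ _ ENNReal.ofReal_ne_top]
      _ ≤ ENNReal.ofReal C * ENNReal.ofReal (B * R ^ 2) +
        ENNReal.ofReal (C * R ^ (2 - (N : ℝ) - q)) * ENNReal.ofReal m := by
          rw [hMm]
          gcongr
          rw [lintegral_const_mul' _ _ ENNReal.ofReal_ne_top]
          gcongr
          refine (setLIntegral_le_lintegral _ _).trans ?_
          rw [lintegral_indicator measurableSet_ball]
          exact hriesz y R hRp
      _ = ENNReal.ofReal (C2 * R ^ 2) := by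
          rw [← ENNReal.ofReal_mul hC.le, ← ENNReal.ofReal_mul (by positivity),
            ← ENNReal.ofReal_add (by positivity) (by positivity)]
          congr 1
          have : R ^ (2 - (N : ℝ) - q) * m = R ^ 2 := by
            rw [hmR, ← Real.rpow_add hRp, ← Real.rpow_natCast R 2]
            congr 1; push_cast; ring
          rw [mul_assoc C _ m, this, hC2]; ring
  have hmain : ENNReal.ofReal t * M ≤ ENNReal.ofReal (C2 * R ^ 2) * ω (Ω \ {0}) := by
    calc ENNReal.ofReal t * M = ∫⁻ x in E, ENNReal.ofReal t * ENNReal.ofReal (W x) := by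
          rw [lintegral_const_mul' _ _ ENNReal.ofReal_ne_top]
      _ ≤ ∫⁻ x in E, ∫⁻ y in Ω \ {0}, ENNReal.ofReal (W x) * ENNReal.ofReal (K x y) ∂ω := by
          apply setLIntegral_mono' hEm
          intro x hx
          rw [lintegral_const_mul' _ _ ENNReal.ofReal_ne_top, mul_comm]
          gcongr
          exact hx.2.le
      _ = ∫⁻ y in Ω \ {0}, ∫⁻ x in E, ENNReal.ofReal (W x) * ENNReal.ofReal (K x y) ∂volume ∂ω := by
          apply lintegral_lintegral_swap
          exact (((hWm.comp measurable_fst).ennreal_ofReal).mul hKm.ennreal_ofReal).aemeasurable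
      _ ≤ ∫⁻ y in Ω \ {0}, ENNReal.ofReal (C2 * R ^ 2) ∂ω := setLIntegral_mono' hYm hinner
      _ = _ := setLIntegral_const _ _
  have hwtop : ω (Ω \ {0}) ≠ ⊤ := measure_ne_top _ _
  set w := (ω (Ω \ {0})).toReal with hw
  have hw0 : 0 ≤ w := ENNReal.toReal_nonneg
  have hww : ω (Ω \ {0}) = ENNReal.ofReal w := (ENNReal.ofReal_toReal hwtop).symm
  have hp : 0 ≤ (N + q) / (N + q - 2) := div_nonneg (by linarith) (by linarith)
  rw [hww, hMm, ← ENNReal.ofReal_mul ht.le, ← ENNReal.ofReal_mul (by positivity),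
    ENNReal.ofReal_le_ofReal_iff (by positivity)] at hmain
  rw [hMm, hww, ENNReal.ofReal_rpow_of_nonneg hw0 hp, ← ENNReal.ofReal_mul (by positivity)]
  apply ENNReal.ofReal_le_ofReal
  exact final_arith ht hmp hw0 hC2p (by linarith) hmain
end

section
/- Let N > 2 be an integer, Ω ⊂ ℝ^N a nonempty bounded open set with 0 ∈ Ω, and let α < (N−2)/2 be a real number. Then there exists C = C(N, Ω, α) > 0 such that for every λ > 0: ∫_{{x ∈ Ω∖{0} : d(x)|x|^{2+α−N} > λ}} d(x)|x|^{−α} dx ≤ C λ^{−(N−α)/(N−α−2)}; that is, the function x ↦ d(x)|x|^{−α}|x|^{−(N−2−2α)} (the Martin kernel with pole at the interior singular point 0) belongs to the weak Lebesgue space L_w^{(N−α)/(N−α−2)}(Ω∖{0}; d(x)|x|^{−α}). -/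
open MeasureTheory Metric Set

lemma mk_aux_integral (N : ℕ) (α : ℝ) (r : ℝ) (hr : 0 < r) :
    ∫ x in ball (0 : EuclideanSpace ℝ (Fin N)) r, ‖x‖ ^ (-α)
      = r ^ ((N : ℝ) - α) * ∫ x in ball (0 : EuclideanSpace ℝ (Fin N)) 1, ‖x‖ ^ (-α) := by
  have h := Measure.setIntegral_comp_smul_of_pos (volume : Measure (EuclideanSpace ℝ (Fin N)))
    (fun x => ‖x‖ ^ (-α)) (ball 0 1) hr
  rw [smul_unitBall_of_pos hr] at h
  simp only [norm_smul, Real.norm_eq_abs, abs_of_pos hr, finrank_euclideanSpace_fin,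
    smul_eq_mul, Real.mul_rpow hr.le (norm_nonneg _), integral_const_mul] at h
  rw [sub_eq_add_neg, Real.rpow_add hr, Real.rpow_natCast, mul_assoc, h]
  field_simp

/-- The Martin-kernel profile `d(x)|x|^{2+α−N}` with pole at the interior singular
point `0` belongs to the weak Lebesgue space
`L_w^{(N−α)/(N−α−2)}(Ω∖{0}; d(x)|x|^{−α})`. -/
theorem martin_kernel_weak_estimate (N : ℕ) (hN : 2 < N)
    (Ω : Set (EuclideanSpace ℝ (Fin N)))
    (hΩo : IsOpen Ω) (hΩb : Bornology.IsBounded Ω) (h0 : (0 : EuclideanSpace ℝ (Fin N)) ∈ Ω)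
    (α : ℝ) (hα : α < ((N : ℝ) - 2) / 2) :
    ∃ C : ℝ, 0 < C ∧ ∀ t : ℝ, 0 < t →
      (∫⁻ x in {x | x ∈ Ω \ {0} ∧ t < infDist x (frontier Ω) * ‖x‖ ^ (2 + α - (N : ℝ))},
        ENNReal.ofReal (infDist x (frontier Ω) * ‖x‖ ^ (-α)))
      ≤ ENNReal.ofReal (C * t ^ (-(((N : ℝ) - α) / ((N : ℝ) - α - 2)))) := by
  have hN' : (2 : ℝ) < N := by exact_mod_cast hN
  have hq : 0 < (N : ℝ) - α - 2 := by linarith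
  obtain ⟨R, hR0, hR⟩ := hΩb.exists_pos_norm_lt
  obtain ⟨D, hD0, hD⟩ : ∃ D : ℝ, 0 < D ∧ ∀ x ∈ Ω, infDist x (frontier Ω) ≤ D := by
    refine ⟨infDist 0 (frontier Ω) + R, add_pos_of_nonneg_of_pos infDist_nonneg hR0, ?_⟩
    intro x hx
    have h1 := infDist_le_infDist_add_dist (s := frontier Ω) (x := x) (y := 0)
    rw [dist_zero_right] at h1
    linarith [hR x hx]
  set I : ℝ := ∫ x in ball (0 : EuclideanSpace ℝ (Fin N)) 1, ‖x‖ ^ (-α) with hI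
  have hI0 : 0 ≤ I := integral_nonneg fun x => by positivity
  set p : ℝ := ((N : ℝ) - α) / ((N : ℝ) - α - 2) with hp
  refine ⟨D * (D ^ p * I) + 1, by positivity, fun t ht => ?_⟩
  set r : ℝ := (D / t) ^ (1 / ((N : ℝ) - α - 2)) with hr
  have hr0 : 0 < r := by positivity
  have hint : IntegrableOn (fun x : EuclideanSpace ℝ (Fin N) => D * ‖x‖ ^ (-α)) (ball 0 r) := by
    suffices h : IntegrableOn (fun x : EuclideanSpace ℝ (Fin N) => ‖x‖ ^ (-α)) (ball 0 r) from
      Integrable.const_mul h D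
    refine integrableOn_ball_of_norm_le_rpow (C := 1) (α := α) ?_ ?_ ?_ ?_
    · rw [finrank_euclideanSpace_fin]; omega
    · rw [finrank_euclideanSpace_fin]; linarith
    · refine Filter.Eventually.of_forall fun x => ?_
      rw [one_mul, Real.norm_of_nonneg (by positivity)]
    · exact (measurable_norm.pow_const _).aestronglyMeasurable
  have hsub : {x | x ∈ Ω \ {0} ∧ t < infDist x (frontier Ω) * ‖x‖ ^ (2 + α - (N : ℝ))}
      ⊆ Ω ∩ ball 0 r := by
    rintro x ⟨⟨hx, hx0⟩, hxt⟩
    refine ⟨hx, ?_⟩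
    have hxp : 0 < ‖x‖ := norm_pos_iff.2 hx0
    rw [mem_ball_zero_iff, hr, one_div, Real.lt_rpow_inv_iff_of_pos hxp.le (by positivity) hq,
      lt_div_iff₀ ht]
    have h1 : t < D * ‖x‖ ^ (2 + α - (N : ℝ)) :=
      hxt.trans_le (mul_le_mul_of_nonneg_right (hD x hx) (by positivity))
    have e : (2 + α - (N : ℝ)) = -((N : ℝ) - α - 2) := by ring
    rw [e, Real.rpow_neg hxp.le, ← div_eq_mul_inv, lt_div_iff₀ (by positivity)] at h1
    linarith
  calc _ ≤ ∫⁻ x in Ω ∩ ball 0 r, ENNReal.ofReal (infDist x (frontier Ω) * ‖x‖ ^ (-α)) :=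
        lintegral_mono_set hsub
    _ ≤ ∫⁻ x in Ω ∩ ball 0 r, ENNReal.ofReal (D * ‖x‖ ^ (-α)) := by
        refine setLIntegral_mono' (hΩo.measurableSet.inter measurableSet_ball) fun x hx => ?_
        exact ENNReal.ofReal_le_ofReal
          (mul_le_mul_of_nonneg_right (hD x hx.1) (by positivity))
    _ ≤ ∫⁻ x in ball (0 : EuclideanSpace ℝ (Fin N)) r, ENNReal.ofReal (D * ‖x‖ ^ (-α)) :=
        lintegral_mono_set inter_subset_right
    _ = ENNReal.ofReal (∫ x in ball (0 : EuclideanSpace ℝ (Fin N)) r, D * ‖x‖ ^ (-α)) := by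
        rw [ofReal_integral_eq_lintegral_ofReal hint
          (Filter.Eventually.of_forall fun x => by positivity)]
    _ ≤ _ := by
        apply ENNReal.ofReal_le_ofReal
        rw [integral_const_mul, mk_aux_integral N α r hr0, ← hI]
        have e : r ^ ((N : ℝ) - α) = D ^ p * t ^ (-p) := by
          rw [hr, ← Real.rpow_mul (by positivity), one_div, inv_mul_eq_div, ← hp,
            Real.div_rpow hD0.le ht.le, Real.rpow_neg ht.le, div_eq_mul_inv]
        rw [e]
        have : 0 < t ^ (-p) := by positivity
        nlinarith
end

section
/- Let N ≥ 1 be an integer and θ > −N a real number. Then there exist constants c = c(N, θ) > 0 and C = C(N, θ) > 0 such that for every x ∈ ℝ^N and every s > 0: c · max{|x|, s}^θ · s^N ≤ ∫_{B(x,s)} |y|^θ dy ≤ C · max{|x|, s}^θ · s^N, where B(x,s) is the open Euclidean ball of center x and radius s. -/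
open MeasureTheory Metric Set

lemma aux_rpow (θ : ℝ) : ∃ k K : ℝ, 0 < k ∧ 0 < K ∧ ∀ M t : ℝ, 0 < M → M / 4 ≤ t → t ≤ 2 * M →
    k * M ^ θ ≤ t ^ θ ∧ t ^ θ ≤ K * M ^ θ := by
  refine ⟨min ((1/4:ℝ) ^ θ) (2 ^ θ), max ((1/4:ℝ) ^ θ) (2 ^ θ), by positivity, by positivity, ?_⟩
  intro M t hM h1 h2
  have ht : 0 < t := by linarith
  have e1 : (1/4:ℝ) ^ θ * M ^ θ = (M / 4) ^ θ := by
    rw [← Real.mul_rpow (by norm_num) hM.le]; congr 1; ring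
  have e2 : (2:ℝ) ^ θ * M ^ θ = (2 * M) ^ θ := by
    rw [← Real.mul_rpow (by norm_num) hM.le]
  have hMθ : 0 ≤ M ^ θ := by positivity
  rw [min_mul_of_nonneg _ _ hMθ, max_mul_of_nonneg _ _ hMθ, e1, e2]
  rcases le_total 0 θ with h | h
  · exact ⟨(min_le_left _ _).trans (Real.rpow_le_rpow (by positivity) h1 h),
      (Real.rpow_le_rpow ht.le h2 h).trans (le_max_right _ _)⟩
  · exact ⟨(min_le_right _ _).trans (Real.rpow_le_rpow_of_nonpos ht h2 h),
      (Real.rpow_le_rpow_of_nonpos (by positivity) h1 h).trans (le_max_left _ _)⟩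

lemma aux_scale (N : ℕ) (θ r : ℝ) (hr : 0 < r) :
    (∫⁻ y in ball (0 : EuclideanSpace ℝ (Fin N)) r, ENNReal.ofReal (‖y‖ ^ θ)) =
      ENNReal.ofReal (r ^ θ * r ^ N) *
        ∫⁻ y in ball (0 : EuclideanSpace ℝ (Fin N)) 1, ENNReal.ofReal (‖y‖ ^ θ) := by
  have hm := Measure.map_addHaar_smul (volume : Measure (EuclideanSpace ℝ (Fin N))) hr.ne'
  have hf : Measurable (fun y : EuclideanSpace ℝ (Fin N) => ENNReal.ofReal (‖y‖ ^ θ)) := by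
    fun_prop
  have h := setLIntegral_map (μ := (volume : Measure (EuclideanSpace ℝ (Fin N))))
    (measurableSet_ball (x := (0 : EuclideanSpace ℝ (Fin N))) (ε := r)) hf
    (measurable_const_smul r)
  have hp : (fun y : EuclideanSpace ℝ (Fin N) => r • y) ⁻¹' ball 0 r = ball 0 1 := by
    ext y
    simp [norm_smul, abs_of_pos hr, hr]
  change ∫⁻ y in ball 0 r, _ ∂(Measure.map (fun y : EuclideanSpace ℝ (Fin N) => r • y) volume)
    = ∫⁻ y in (fun y : EuclideanSpace ℝ (Fin N) => r • y) ⁻¹' ball 0 r, _ at h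
  rw [hm, hp, Measure.restrict_smul, lintegral_smul_measure] at h
  have h2 : ∀ y : EuclideanSpace ℝ (Fin N), ENNReal.ofReal (‖r • y‖ ^ θ)
      = ENNReal.ofReal (r ^ θ) * ENNReal.ofReal (‖y‖ ^ θ) := by
    intro y
    rw [norm_smul, Real.norm_of_nonneg hr.le, Real.mul_rpow hr.le (norm_nonneg _),
      ENNReal.ofReal_mul (by positivity)]
  simp only [h2] at h
  rw [lintegral_const_mul _ hf] at h
  rw [mul_comm (r ^ θ), ENNReal.ofReal_mul (by positivity), mul_assoc, ← h, smul_eq_mul,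
    ← mul_assoc, ← ENNReal.ofReal_mul (by positivity)]
  have : r ^ N * |(r ^ Module.finrank ℝ (EuclideanSpace ℝ (Fin N)))⁻¹| = 1 := by
    rw [finrank_euclideanSpace_fin, abs_of_pos (by positivity)]
    field_simp
  rw [this]; simp

lemma aux_fin (N : ℕ) (hN : 1 ≤ N) (θ : ℝ) (hθ : -(N : ℝ) < θ) :
    (∫⁻ y in ball (0 : EuclideanSpace ℝ (Fin N)) 1, ENNReal.ofReal (‖y‖ ^ θ)) ≠ ⊤ := by
  have hi : IntegrableOn (fun y : EuclideanSpace ℝ (Fin N) => ‖y‖ ^ θ) (ball 0 1) volume := by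
    refine integrableOn_ball_of_norm_le_rpow (C := 1) (α := -θ) (by simpa using hN)
      (by simp; linarith) ?_ ?_
    · refine Filter.Eventually.of_forall fun y => ?_
      rw [Real.norm_of_nonneg (by positivity)]; simp
    · exact Measurable.aestronglyMeasurable (by fun_prop)
  exact hi.lintegral_lt_top.ne

/-- Two-sided estimate `∫_{B(x,s)} |y|^θ dy ≈ max{|x|,s}^θ s^N` for `θ > −N`. -/
theorem ball_integral_norm_rpow (N : ℕ) (hN : 1 ≤ N) (θ : ℝ) (hθ : -(N : ℝ) < θ) :
    ∃ c C : ℝ, 0 < c ∧ 0 < C ∧ ∀ (x : EuclideanSpace ℝ (Fin N)) (s : ℝ), 0 < s →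
      ENNReal.ofReal (c * max ‖x‖ s ^ θ * s ^ (N : ℝ)) ≤
          (∫⁻ y in Metric.ball x s, ENNReal.ofReal (‖y‖ ^ θ)) ∧
        (∫⁻ y in Metric.ball x s, ENNReal.ofReal (‖y‖ ^ θ)) ≤
          ENNReal.ofReal (C * max ‖x‖ s ^ θ * s ^ (N : ℝ)) := by
  obtain ⟨k, K, hk, hK, H⟩ := aux_rpow θ
  have hsc := aux_scale N θ
  have hfin := aux_fin N hN θ hθ
  set I := ∫⁻ y in ball (0 : EuclideanSpace ℝ (Fin N)) 1, ENNReal.ofReal (‖y‖ ^ θ) with hI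
  set V := volume (ball (0 : EuclideanSpace ℝ (Fin N)) 1) with hV
  have hVfin : V ≠ ⊤ := measure_ball_lt_top.ne
  have hVpos : 0 < V.toReal :=
    ENNReal.toReal_pos (measure_ball_pos _ _ one_pos).ne' hVfin
  have hvol : ∀ (x : EuclideanSpace ℝ (Fin N)) (r : ℝ), 0 < r →
      volume (ball x r) = ENNReal.ofReal (r ^ N * V.toReal) := by
    intro x r hr
    rw [Measure.addHaar_ball_of_pos _ _ hr, finrank_euclideanSpace_fin,
      ENNReal.ofReal_mul (by positivity), ENNReal.ofReal_toReal hVfin]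
  have hI0 : 0 ≤ I.toReal := ENNReal.toReal_nonneg
  refine ⟨k * (1/4) ^ N * V.toReal, K * V.toReal + 3 ^ θ * 3 ^ N * K * I.toReal,
    by positivity, by positivity, ?_⟩
  intro x s hs
  rw [Real.rpow_natCast]
  set M := max ‖x‖ s with hM
  have hMs : s ≤ M := le_max_right _ _
  have hMx : ‖x‖ ≤ M := le_max_left _ _
  have hMp : 0 < M := by linarith
  have hMθ : 0 < M ^ θ := by positivity
  constructor
  · obtain ⟨z, hz1, hz2⟩ : ∃ z : EuclideanSpace ℝ (Fin N), ‖z - x‖ = s / 2 ∧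
        ‖z‖ = ‖x‖ + s / 2 := by
      by_cases hx : x = 0
      · have : Nonempty (Fin N) := ⟨⟨0, hN⟩⟩
        obtain ⟨z, hz⟩ := exists_norm_eq (EuclideanSpace ℝ (Fin N)) (by positivity : 0 ≤ s / 2)
        exact ⟨z, by simp [hx, hz], by simp [hx, hz]⟩
      · have hx' : 0 < ‖x‖ := norm_pos_iff.2 hx
        refine ⟨(1 + s / 2 / ‖x‖) • x, ?_, ?_⟩
        · rw [add_smul, one_smul, add_sub_cancel_left, norm_smul,
            Real.norm_of_nonneg (by positivity)]
          field_simp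
        · rw [norm_smul, Real.norm_of_nonneg (by positivity)]
          field_simp
    have hsub : ball z (s / 4) ⊆ ball x s := by
      apply ball_subset_ball'
      rw [dist_eq_norm, hz1]; linarith
    calc ENNReal.ofReal (k * (1/4) ^ N * V.toReal * M ^ θ * s ^ N)
        = ENNReal.ofReal (k * M ^ θ) * volume (ball z (s / 4)) := by
          rw [hvol _ _ (by positivity), ← ENNReal.ofReal_mul (by positivity)]
          congr 1; rw [div_pow, div_pow]; ring
      _ = ∫⁻ y in ball z (s / 4), ENNReal.ofReal (k * M ^ θ) := by
          rw [setLIntegral_const]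
      _ ≤ ∫⁻ y in ball z (s / 4), ENNReal.ofReal (‖y‖ ^ θ) := by
          refine setLIntegral_mono' measurableSet_ball fun y hy => ENNReal.ofReal_le_ofReal ?_
          rw [mem_ball, dist_eq_norm] at hy
          have h1 := norm_sub_norm_le z y
          have h2 := norm_sub_norm_le y z
          rw [norm_sub_rev] at h1
          have h3 : M ≤ ‖x‖ + s := max_le (by linarith) (by linarith [norm_nonneg x])
          have := norm_nonneg x
          exact (H M ‖y‖ hMp (by linarith) (by linarith)).1
      _ ≤ _ := lintegral_mono_set hsub
  · rcases le_or_gt (2 * s) ‖x‖ with hx | hx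
    · have hMe : M = ‖x‖ := max_eq_left (by linarith)
      calc _ ≤ ∫⁻ y in ball x s, ENNReal.ofReal (K * M ^ θ) := by
            refine setLIntegral_mono' measurableSet_ball fun y hy => ENNReal.ofReal_le_ofReal ?_
            rw [mem_ball, dist_eq_norm] at hy
            have h1 := norm_sub_norm_le x y
            have h2 := norm_sub_norm_le y x
            rw [norm_sub_rev] at h1
            exact (H M ‖y‖ hMp (by linarith) (by linarith)).2
        _ = ENNReal.ofReal (K * V.toReal * M ^ θ * s ^ N) := by
            rw [setLIntegral_const, hvol _ _ hs, ← ENNReal.ofReal_mul (by positivity)]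
            congr 1; ring
        _ ≤ _ := by
            apply ENNReal.ofReal_le_ofReal
            gcongr
            have : 0 ≤ (3:ℝ) ^ θ * 3 ^ N * K * I.toReal := by positivity
            linarith
    · have hM2 : M ≤ 2 * s := max_le hx.le (by linarith)
      have hsub : ball x s ⊆ ball 0 (3 * s) := by
        apply ball_subset_ball'
        rw [dist_zero_right]; linarith
      have hH := (H M s hMp (by linarith) (by linarith)).2
      calc _ ≤ _ := lintegral_mono_set hsub
        _ = ENNReal.ofReal ((3 * s) ^ θ * (3 * s) ^ N * I.toReal) := by
            rw [hsc _ (by positivity), ENNReal.ofReal_mul (q := I.toReal) (by positivity),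
              ENNReal.ofReal_toReal hfin]
        _ ≤ _ := by
            apply ENNReal.ofReal_le_ofReal
            rw [Real.mul_rpow (by norm_num) hs.le, mul_pow]
            calc (3:ℝ) ^ θ * s ^ θ * (3 ^ N * s ^ N) * I.toReal
                ≤ (3:ℝ) ^ θ * (K * M ^ θ) * (3 ^ N * s ^ N) * I.toReal := by gcongr
              _ = (0 + 3 ^ θ * 3 ^ N * K * I.toReal) * M ^ θ * s ^ N := by ring
              _ ≤ _ := by gcongr; positivity
end

section
/- Let N > 2 be an integer, Ω ⊂ ℝ^N a nonempty bounded open set with 0 ∈ Ω, let 0 < α < (N−2)/2 and 1 < p < (N+1)/(N−1). Then there exists C = C(N, Ω, α, p) > 0 such that for every z ∈ Ω ∖ {0}: ∫_{Ω∖{0}} ( G*(x,z) / ( d(z)|z|^{−α} ) )^p · d(x)|x|^{−α} dx ≤ C, where G*(x,z) = |x−z|^{2−N} · min{1, d(x)d(z)/|x−z|^2} · ( min{1, |x||z|/|x−z|^2} )^{−α}. -/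
open MeasureTheory Metric Set

lemma aux1 (p r dx dz : ℝ) (hp : 1 < p) (hr : 0 < r) (hdx : 0 ≤ dx) (hdz : 0 < dz)
    (h : dx ≤ dz + r) :
    (min 1 (dx * dz / r ^ 2) / dz) ^ p * dx ≤ 4 * 2 ^ (p - 1) * r ^ (1 - p) := by
  set q := min 1 (dx * dz / r ^ 2) / dz with hq
  have hq0 : 0 ≤ q := by positivity
  have h1 : q ≤ 1 / dz := by
    rw [hq]; gcongr; exact min_le_left _ _
  have h2 : q ≤ dx / r ^ 2 := by
    rw [hq, div_le_iff₀ hdz]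
    refine (min_le_right _ _).trans (le_of_eq (by ring))
  have h3 : q ≤ 2 / r ∧ q * dx ≤ 4 := by
    rcases le_total r dz with hh | hh
    · constructor
      · refine h1.trans ?_
        rw [div_le_div_iff₀ hdz hr]; linarith
      · calc q * dx ≤ 1 / dz * (2 * dz) := by gcongr; linarith
          _ = 2 := by field_simp
          _ ≤ 4 := by norm_num
    · have h4 : q ≤ 2 / r := by
        refine h2.trans ?_
        rw [div_le_div_iff₀ (by positivity) hr]; nlinarith
      refine ⟨h4, ?_⟩
      calc q * dx ≤ 2 / r * (2 * r) := by gcongr; linarith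
          _ = 4 := by field_simp; norm_num
  rcases hq0.eq_or_lt with h0 | h0
  · rw [← h0, Real.zero_rpow (by linarith)]; simp; positivity
  have : q ^ p = q ^ (p - 1) * q := by
    rw [← Real.rpow_add_one h0.ne']; ring_nf
  rw [this, mul_assoc]
  calc q ^ (p - 1) * (q * dx) ≤ (2 / r) ^ (p - 1) * 4 := by
        apply mul_le_mul _ h3.2 (by positivity) (by positivity)
        exact Real.rpow_le_rpow hq0 h3.1 (by linarith)
    _ = _ := by
      rw [Real.div_rpow (by norm_num) hr.le, show 1 - p = -(p - 1) by ring, Real.rpow_neg hr.le]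
      field_simp

lemma aux2 (α p s D : ℝ) (hα : 0 < α) (hp : 1 < p) (hD : 1 ≤ D) :
    ∃ K : ℝ, 0 < K ∧ ∀ r a b : ℝ, 0 < r → 0 < a → 0 < b → r ≤ D → a ≤ D → b ≤ a + r →
    ((min 1 (a * b / r ^ 2)) ^ (-α) * b ^ α) ^ p * a ^ (-α) * r ^ (-s) ≤
      K * (r ^ (-s) + a ^ (-s) + a ^ (-(α * (p + 1)))) := by
  have hD0 : 0 < D := by linarith
  have hap : 0 < α * (p - 1) := mul_pos hα (by linarith)
  refine ⟨3 ^ (α * p) * D ^ (α * (p - 1)) + D ^ |2 * α * p - s|, by positivity, ?_⟩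
  intro r a b hr ha hb hrD haD hbar
  have e1 : 0 < r ^ (-s) := by positivity
  have e2 : 0 < a ^ (-s) := by positivity
  have e3 : 0 < a ^ (-(α * (p + 1))) := by positivity
  have k1 : 0 < (3:ℝ) ^ (α * p) * D ^ (α * (p - 1)) := by positivity
  have k2 : 0 < D ^ |2 * α * p - s| := by positivity
  have k3 : D ^ (α * (p - 1)) ≤ 3 ^ (α * p) * D ^ (α * (p - 1)) := by
    have : (1:ℝ) ≤ 3 ^ (α * p) := Real.one_le_rpow (by norm_num) (by positivity)
    nlinarith [Real.rpow_pos_of_pos hD0 (α * (p - 1))]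
  rcases le_total (r ^ 2) (a * b) with h | h
  · have hb3 : b ≤ 3 * a := by
      rcases le_total r a with hh | hh
      · linarith
      · have : r ≤ 2 * a := by nlinarith
        linarith
    rw [min_eq_left ((one_le_div (by positivity)).2 h), Real.one_rpow, one_mul]
    have : (b ^ α) ^ p * a ^ (-α) ≤ 3 ^ (α * p) * D ^ (α * (p - 1)) := by
      calc (b ^ α) ^ p * a ^ (-α) ≤ ((3 * a) ^ α) ^ p * a ^ (-α) := by gcongr
        _ = 3 ^ (α * p) * a ^ (α * (p - 1)) := by
          rw [← Real.rpow_mul (by positivity), Real.mul_rpow (by norm_num) ha.le, mul_assoc,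
            ← Real.rpow_add ha]; ring_nf
        _ ≤ _ := by gcongr
    calc _ ≤ (3 ^ (α * p) * D ^ (α * (p - 1))) * r ^ (-s) := by gcongr
      _ ≤ _ := by gcongr <;> linarith
  · rw [min_eq_right ((div_le_one (by positivity)).2 h)]
    have : ((a * b / r ^ 2) ^ (-α) * b ^ α) ^ p * a ^ (-α) * r ^ (-s)
        = a ^ (-(α * (p + 1))) * r ^ (2 * α * p - s) := by
      have : (a * b / r ^ 2) ^ (-α) * b ^ α = a ^ (-α) * r ^ (2 * α) := by
        rw [Real.div_rpow (by positivity) (by positivity), Real.mul_rpow ha.le hb.le,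
          ← Real.rpow_natCast, ← Real.rpow_mul hr.le, Real.rpow_neg hb.le]
        push_cast
        rw [show (2:ℝ) * -α = -(2 * α) by ring, Real.rpow_neg hr.le (2 * α)]
        field_simp
      rw [this, Real.mul_rpow (by positivity) (by positivity), ← Real.rpow_mul ha.le,
        ← Real.rpow_mul hr.le,
        show -(α * (p + 1)) = -α * p + -α by ring, Real.rpow_add ha,
        show 2 * α * p - s = 2 * α * p + -s by ring, Real.rpow_add hr]
      ring
    rw [this]
    rcases le_total r a with hh | hh
    · calc a ^ (-(α * (p + 1))) * r ^ (2 * α * p - s)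
          ≤ r ^ (-(α * (p + 1))) * r ^ (2 * α * p - s) := by
            apply mul_le_mul_of_nonneg_right _ (by positivity)
            exact Real.rpow_le_rpow_of_nonpos hr hh
              (neg_nonpos.2 (mul_nonneg hα.le (by linarith)))
        _ = r ^ (α * (p - 1)) * r ^ (-s) := by
            rw [← Real.rpow_add hr, ← Real.rpow_add hr]; ring_nf
        _ ≤ D ^ (α * (p - 1)) * r ^ (-s) := by gcongr
        _ ≤ _ := by gcongr <;> linarith
    · rcases le_total 0 (2 * α * p - s) with he | he
      · calc a ^ (-(α * (p + 1))) * r ^ (2 * α * p - s)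
          ≤ a ^ (-(α * (p + 1))) * D ^ (2 * α * p - s) := by gcongr
        _ = D ^ |2 * α * p - s| * a ^ (-(α * (p + 1))) := by rw [abs_of_nonneg he]; ring
        _ ≤ _ := by gcongr <;> linarith
      · calc a ^ (-(α * (p + 1))) * r ^ (2 * α * p - s)
          ≤ a ^ (-(α * (p + 1))) * a ^ (2 * α * p - s) := by
              exact mul_le_mul_of_nonneg_left (Real.rpow_le_rpow_of_nonpos ha hh he) e3.le
        _ = a ^ (α * (p - 1)) * a ^ (-s) := by
            rw [← Real.rpow_add ha, ← Real.rpow_add ha]; ring_nf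
        _ ≤ D ^ (α * (p - 1)) * a ^ (-s) := by gcongr
        _ ≤ _ := by gcongr <;> linarith

lemma aux3 (n α p D : ℝ) (hα : 0 < α) (hp : 1 < p) (hD : 1 ≤ D) :
    ∃ K : ℝ, 0 < K ∧ ∀ r a b dx dz : ℝ, 0 < r → 0 < a → 0 < b → r ≤ D → a ≤ D → b ≤ a + r →
      0 ≤ dx → 0 < dz → dx ≤ dz + r →
    ((r ^ (2 - n) * min 1 (dx * dz / r ^ 2) * (min 1 (a * b / r ^ 2)) ^ (-α)) /
      (dz * b ^ (-α))) ^ p * (dx * a ^ (-α)) ≤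
      K * (r ^ (-((n - 1) * p - 1)) + a ^ (-((n - 1) * p - 1)) + a ^ (-(α * (p + 1)))) := by
  obtain ⟨K, hK, H⟩ := aux2 α p ((n - 1) * p - 1) D hα hp hD
  refine ⟨4 * 2 ^ (p - 1) * K, by positivity, ?_⟩
  intro r a b dx dz hr ha hb hrD haD hbar hdx hdz hh
  have A := aux1 p r dx dz hp hr hdx hdz hh
  have B := H r a b hr ha hb hrD haD hbar
  set M := min 1 (dx * dz / r ^ 2) with hM
  set m := min 1 (a * b / r ^ 2) with hm
  have hM0 : 0 ≤ M := by positivity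
  have hm0 : 0 < m := by positivity
  have e : (r ^ (2 - n) * M * m ^ (-α)) / (dz * b ^ (-α))
      = r ^ (2 - n) * ((M / dz) * (m ^ (-α) * b ^ α)) := by
    rw [Real.rpow_neg hb.le]; field_simp
  rw [e, Real.mul_rpow (by positivity) (by positivity), Real.mul_rpow (by positivity) (by positivity),
    ← Real.rpow_mul hr.le]
  calc r ^ ((2 - n) * p) * ((M / dz) ^ p * (m ^ (-α) * b ^ α) ^ p) * (dx * a ^ (-α))
      = r ^ ((2 - n) * p) * ((M / dz) ^ p * dx) * ((m ^ (-α) * b ^ α) ^ p * a ^ (-α)) := by ring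
    _ ≤ r ^ ((2 - n) * p) * (4 * 2 ^ (p - 1) * r ^ (1 - p)) *
        ((m ^ (-α) * b ^ α) ^ p * a ^ (-α)) := by gcongr
    _ = 4 * 2 ^ (p - 1) * ((m ^ (-α) * b ^ α) ^ p * a ^ (-α) * r ^ (-((n - 1) * p - 1))) := by
      rw [show -((n - 1) * p - 1) = (2 - n) * p + (1 - p) by ring, Real.rpow_add hr]; ring
    _ ≤ 4 * 2 ^ (p - 1) * (K * (r ^ (-((n - 1) * p - 1)) + a ^ (-((n - 1) * p - 1)) +
        a ^ (-(α * (p + 1))))) := by gcongr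
    _ = _ := by ring

lemma aux4 (N : ℕ) (hN : 2 < N) (t D : ℝ) (ht : t < N) :
    ∃ I : ℝ, 0 ≤ I ∧ ∀ z : EuclideanSpace ℝ (Fin N),
      ∫⁻ x in ball z D, ENNReal.ofReal (dist x z ^ (-t)) ≤ ENNReal.ofReal I := by
  have h1 : IntegrableOn (fun x : EuclideanSpace ℝ (Fin N) => ‖x‖ ^ (-t)) (ball 0 D) := by
    refine integrableOn_ball_of_norm_le_rpow (C := 1) (α := t) (by simp; omega) (by simpa using ht) ?_ ?_
    · refine Filter.Eventually.of_forall fun x => ?_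
      rw [Real.norm_of_nonneg (by positivity), one_mul]
    · exact (measurable_norm.pow_const _).aestronglyMeasurable
  have h2 := h1.lintegral_lt_top
  refine ⟨(∫⁻ x in ball (0 : EuclideanSpace ℝ (Fin N)) D,
    ENNReal.ofReal (‖x‖ ^ (-t))).toReal, ENNReal.toReal_nonneg, fun z => ?_⟩
  · rw [ENNReal.ofReal_toReal h2.ne]
    have := (measurePreserving_sub_right (volume : Measure (EuclideanSpace ℝ (Fin N))) z).setLIntegral_comp_preimage
      (measurableSet_ball (x := 0) (ε := D))
      (f := fun x => ENNReal.ofReal (‖x‖ ^ (-t))) (by fun_prop)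
    rw [← this]
    apply le_of_eq
    have hs : (fun x => x - z) ⁻¹' ball (0 : EuclideanSpace ℝ (Fin N)) D = ball z D := by
      ext x; simp [dist_eq_norm]
    rw [hs]
    simp [dist_eq_norm]

theorem green_kernel_uniform_Lp (N : ℕ) (hN : 2 < N)
    (Ω : Set (EuclideanSpace ℝ (Fin N)))
    (hΩo : IsOpen Ω) (hΩb : Bornology.IsBounded Ω) (h0 : (0 : EuclideanSpace ℝ (Fin N)) ∈ Ω)
    (α p : ℝ) (hα0 : 0 < α) (hα : α < ((N : ℝ) - 2) / 2)
    (hp1 : 1 < p) (hp2 : p < ((N : ℝ) + 1) / ((N : ℝ) - 1)) :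
    ∃ C : ℝ, 0 < C ∧ ∀ z ∈ Ω \ ({0} : Set (EuclideanSpace ℝ (Fin N))),
      (∫⁻ x in Ω \ {0}, ENNReal.ofReal
        (((dist x z ^ (2 - (N : ℝ)) *
            min 1 (infDist x (frontier Ω) * infDist z (frontier Ω) / dist x z ^ 2) *
            (min 1 (‖x‖ * ‖z‖ / dist x z ^ 2)) ^ (-α)) /
          (infDist z (frontier Ω) * ‖z‖ ^ (-α))) ^ p *
          (infDist x (frontier Ω) * ‖x‖ ^ (-α))))
      ≤ ENNReal.ofReal C := by
  have hN' : (3 : ℝ) ≤ N := by exact_mod_cast hN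
  obtain ⟨D', hD'⟩ := Metric.isBounded_iff.1 hΩb
  obtain ⟨D, hD1, hDD⟩ : ∃ D : ℝ, 1 ≤ D ∧ D' < D :=
    ⟨max 1 (D' + 1), le_max_left _ _, lt_of_lt_of_le (by linarith) (le_max_right _ _)⟩
  have hp3 : p * (N - 1) < N + 1 := by rwa [lt_div_iff₀ (by linarith)] at hp2
  set s : ℝ := (N - 1) * p - 1 with hs
  have hsN : s < N := by rw [hs]; linarith
  have htN : α * (p + 1) < N := by
    have hp4 : p < 2 := by nlinarith
    have : (p + 1) * (N - 1) < 2 * N := by linarith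
    have : α * (p + 1) < (N - 2) / 2 * (p + 1) := mul_lt_mul_of_pos_right hα (by linarith)
    nlinarith
  obtain ⟨K, hK, H⟩ := aux3 N α p D hα0 hp1 hD1
  obtain ⟨I₁, hI₁, J₁⟩ := aux4 N hN s D hsN
  obtain ⟨I₂, hI₂, J₂⟩ := aux4 N hN (α * (p + 1)) D htN
  refine ⟨K * (I₁ + I₁ + I₂) + 1, by positivity, ?_⟩
  rintro z ⟨hz, hz0⟩
  have hb : 0 < ‖z‖ := norm_pos_iff.2 hz0
  let g : EuclideanSpace ℝ (Fin N) → ENNReal := fun x => ENNReal.ofReal K *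
    (ENNReal.ofReal (dist x z ^ (-s)) + ENNReal.ofReal (dist x 0 ^ (-s))
      + ENNReal.ofReal (dist x 0 ^ (-(α * (p + 1)))))
  have hsub : ∀ w ∈ Ω, Ω \ {0} ⊆ ball w D := fun w hw x hx =>
    mem_ball.2 ((hD' hx.1 hw).trans_lt hDD)
  calc _ ≤ ∫⁻ x in Ω \ {0}, g x := by
        refine setLIntegral_mono' (hΩo.measurableSet.diff (measurableSet_singleton 0)) ?_
        rintro x ⟨hx, hx0⟩
        have ha : 0 < ‖x‖ := norm_pos_iff.2 hx0
        have hg : g x = ENNReal.ofReal (K * (dist x z ^ (-s) + ‖x‖ ^ (-s) +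
            ‖x‖ ^ (-(α * (p + 1))))) := by
          simp only [g, dist_zero_right]
          rw [ENNReal.ofReal_mul hK.le, ENNReal.ofReal_add (by positivity) (by positivity),
            ENNReal.ofReal_add (by positivity) (by positivity)]
        rw [hg]
        apply ENNReal.ofReal_le_ofReal
        rcases (dist_nonneg (x := x) (y := z)).eq_or_lt with hr | hr
        · rw [← hr, Real.zero_rpow (by linarith : (2 - (N:ℝ)) ≠ 0)]
          simp only [zero_mul, zero_div]
          rw [Real.zero_rpow (by linarith), zero_mul]
          positivity
        rcases (infDist_nonneg (x := z) (s := frontier Ω)).eq_or_lt with hd | hd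
        · rw [← hd]
          simp only [zero_mul, div_zero]
          rw [Real.zero_rpow (by linarith), zero_mul]
          positivity
        refine H _ _ _ _ _ hr ha hb ((hD' hx hz).trans hDD.le) ?_ ?_ infDist_nonneg hd
          infDist_le_infDist_add_dist
        · have := hD' hx h0
          rw [dist_zero_right] at this; linarith
        · have := dist_triangle_left z 0 x
          simp only [dist_zero_right] at this; linarith
    _ = ENNReal.ofReal K * (((∫⁻ x in Ω \ {0}, ENNReal.ofReal (dist x z ^ (-s))) +
          ∫⁻ x in Ω \ {0}, ENNReal.ofReal (dist x 0 ^ (-s))) +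
          ∫⁻ x in Ω \ {0}, ENNReal.ofReal (dist x 0 ^ (-(α * (p + 1))))) := by
        rw [lintegral_const_mul _ (by fun_prop), lintegral_add_left (by fun_prop),
          lintegral_add_left (by fun_prop)]
    _ ≤ ENNReal.ofReal K * (ENNReal.ofReal I₁ + ENNReal.ofReal I₁ + ENNReal.ofReal I₂) := by
        gcongr
        · exact (lintegral_mono_set (hsub z hz)).trans (J₁ z)
        · exact (lintegral_mono_set (hsub 0 h0)).trans (J₁ 0)
        · exact (lintegral_mono_set (hsub 0 h0)).trans (J₂ 0)
    _ = ENNReal.ofReal (K * (I₁ + I₁ + I₂)) := by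
        rw [ENNReal.ofReal_mul hK.le, ENNReal.ofReal_add (by positivity) (by positivity),
            ENNReal.ofReal_add (by positivity) (by positivity)]
    _ ≤ _ := ENNReal.ofReal_le_ofReal (by linarith)
end
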